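/- arXiv:2010.01529 — 7 statements merged into one kernel-verified Lean document; each statement's English description precedes it below -/
import Mathlib

section
/- Let ψ ∈ C²_b(ℝ³) (bounded with bounded continuous derivatives up to order two). Then for all v, v_* ∈ ℝ³ with v ≠ v_* and all ω ∈ S², |Δψ(v', v'_*, v, v_*)| ≤ C*_ψ(v, v_*) · |v − v_*|² · |sin θ cos θ|, where θ = arccos(n·ω) with n = (v − v_*)/|v − v_*|. -/
/-!
Put `a = ⟪v - w, ω⟫ ω` and `b = v - w - a`. These are orthogonal, and the four velocities are the
vertices `w`, `w + a`, `w + b`, `w + a + b = v` of a rectangle. Hence `-Δψ` is a mixed second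
difference of `ψ`, and two applications of the mean value theorem give `-Δψ = D²ψ(u)(a, b)` at some
point `u` of the rectangle (`exists_mixed_difference_eq`). As `⟪a, b⟫ = 0`, a multiple of the
identity may be subtracted from `D²ψ(u)` for free, so Cauchy–Schwarz (`abs_hess_apply_le`) bounds
this by `|D²ψ(u) - c I| ‖a‖ ‖b‖` for every `c`. The choices `c = 0` and `c = Tr(D²ψ(0)) / 3` give the
two entries of the minimum: by convexity and `‖w + a‖² + ‖w + b‖² = ‖v‖² + ‖w‖²`
the point `u` lies in the ball of radius `√(‖v‖² + ‖w‖²)`. Finally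
`‖a‖ ‖b‖ = ‖v - w‖² |sin θ cos θ|`.
-/

open MeasureTheory Real Filter
open scoped RealInnerProductSpace Topology

noncomputable section

abbrev E3 := EuclideanSpace ℝ (Fin 3)

/-- The Hessian of `ψ` at `u` as a `3 × 3` matrix. -/
noncomputable def hessMat (ψ : E3 → ℝ) (u : E3) : Matrix (Fin 3) (Fin 3) ℝ :=
  Matrix.of fun i j =>
    iteratedFDeriv ℝ 2 ψ u ![EuclideanSpace.single i (1 : ℝ), EuclideanSpace.single j (1 : ℝ)]

/-- Frobenius norm of a `3 × 3` real matrix. -/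
noncomputable def frobNorm (A : Matrix (Fin 3) (Fin 3) ℝ) : ℝ :=
  Real.sqrt (∑ i, ∑ j, (A i j) ^ 2)

/-- `‖D²ψ‖_∞ = sup_u |D²ψ(u)|`. -/
noncomputable def hessSupNorm (ψ : E3 → ℝ) : ℝ :=
  ⨆ u : E3, frobNorm (hessMat ψ u)

/-- `‖D²ψ‖_* = sup_{v,v_*} (1+|v|²+|v_*|²)^{-1/4} sup_{|u| ≤ √(|v|²+|v_*|²)}
      |D²ψ(u) - (1/3) Tr(D²ψ(0)) I|`. -/
noncomputable def hessStarNorm (ψ : E3 → ℝ) : ℝ :=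
  ⨆ p : E3 × E3,
    (1 + ‖p.1‖ ^ 2 + ‖p.2‖ ^ 2) ^ (-(1 / 4 : ℝ)) *
      ⨆ u : {u : E3 // ‖u‖ ≤ Real.sqrt (‖p.1‖ ^ 2 + ‖p.2‖ ^ 2)},
        frobNorm (hessMat ψ u -
          ((1 / 3) * Matrix.trace (hessMat ψ 0)) • (1 : Matrix (Fin 3) (Fin 3) ℝ))

/-- `C*_ψ(v,v_*) = min{‖D²ψ‖_∞, ‖D²ψ‖_* (1+|v|²+|v_*|²)^{1/4}}`. -/
noncomputable def Cstar (ψ : E3 → ℝ) (v w : E3) : ℝ :=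
  min (hessSupNorm ψ) (hessStarNorm ψ * (1 + ‖v‖ ^ 2 + ‖w‖ ^ 2) ^ ((1 / 4 : ℝ)))

/-- A mixed second difference is the second derivative at a point of the parallelogram. -/
lemma exists_mixed_difference_eq (ψ : E3 → ℝ) (hψ : ContDiff ℝ 2 ψ) (w a b : E3) :
    ∃ s ∈ Set.Icc (0 : ℝ) 1, ∃ t ∈ Set.Icc (0 : ℝ) 1,
      ψ (w + b + a) - ψ (w + b) - ψ (w + a) + ψ w =
        iteratedFDeriv ℝ 2 ψ (w + s • b + t • a) ![a, b] := by
  have hd : Differentiable ℝ ψ := hψ.differentiable (by norm_num)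
  have hd2 : Differentiable ℝ (fderiv ℝ ψ) :=
    (hψ.fderiv_right (m := 1) (by norm_num)).differentiable (by norm_num)
  have hline : ∀ (x y : E3) (s : ℝ), HasDerivAt (fun s : ℝ => x + s • y) y s := by
    intro x y s
    simpa using ((hasDerivAt_id s).smul_const y).const_add x
  have hg : ∀ s : ℝ, HasDerivAt (fun s : ℝ => ψ (w + a + s • b) - ψ (w + s • b))
      (fderiv ℝ ψ (w + a + s • b) b - fderiv ℝ ψ (w + s • b) b) s := by
    intro s
    exact ((hd _).hasFDerivAt.comp_hasDerivAt s (hline (w + a) b s)).sub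
      ((hd _).hasFDerivAt.comp_hasDerivAt s (hline w b s))
  obtain ⟨s, hs, hs'⟩ := exists_hasDerivAt_eq_slope _ _ (zero_lt_one' ℝ)
    (fun s _ => (hg s).continuousAt.continuousWithinAt) (fun s _ => hg s)
  have hh : ∀ t : ℝ, HasDerivAt (fun t : ℝ => fderiv ℝ ψ (w + s • b + t • a) b)
      (fderiv ℝ (fderiv ℝ ψ) (w + s • b + t • a) a b) t := by
    intro t
    have h1 := (hd2 _).hasFDerivAt.comp_hasDerivAt t (hline (w + s • b) a t)
    simpa using h1.clm_apply (hasDerivAt_const t b)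
  obtain ⟨t, ht, ht'⟩ := exists_hasDerivAt_eq_slope _ _ (zero_lt_one' ℝ)
    (fun t _ => (hh t).continuousAt.continuousWithinAt) (fun t _ => hh t)
  refine ⟨s, Set.Ioo_subset_Icc_self hs, t, Set.Ioo_subset_Icc_self ht, ?_⟩
  rw [iteratedFDeriv_two_apply]
  simp only [Matrix.cons_val_zero, Matrix.cons_val_one]
  rw [ht']
  simp only [one_smul, zero_smul, add_zero, sub_zero, div_one] at hs' ⊢
  rw [show w + s • b + a = w + a + s • b by abel, hs', show w + b + a = w + a + b by abel]
  ring

lemma hess_apply_eq_sum (ψ : E3 → ℝ) (u a b : E3) :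
    iteratedFDeriv ℝ 2 ψ u ![a, b] = ∑ i, ∑ j, a i * b j * hessMat ψ u i j := by
  have key : ∀ x : E3, x = ∑ i, x i • EuclideanSpace.single i (1 : ℝ) := by
    intro x
    ext k
    fin_cases k <;> simp [Fin.sum_univ_three]
  simp only [hessMat, Matrix.of_apply, iteratedFDeriv_two_apply, Matrix.cons_val_zero,
    Matrix.cons_val_one]
  conv_lhs => rw [key a, key b]
  simp only [map_sum, map_smul, sum_apply, smul_apply,
    smul_eq_mul, Finset.mul_sum]
  rw [Finset.sum_comm]
  refine Finset.sum_congr rfl fun i _ => Finset.sum_congr rfl fun j _ => ?_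
  ring

lemma abs_bilin_le (A : Matrix (Fin 3) (Fin 3) ℝ) (a b : E3) :
    |∑ i, ∑ j, a i * b j * A i j| ≤ frobNorm A * (‖a‖ * ‖b‖) := by
  have h := Finset.sum_mul_sq_le_sq_mul_sq (Finset.univ : Finset (Fin 3 × Fin 3))
    (fun p => a p.1 * b p.2) (fun p => A p.1 p.2)
  simp only [Fintype.sum_prod_type] at h
  have h2 : ∑ i, ∑ j, (a i * b j) ^ 2 = ‖a‖ ^ 2 * ‖b‖ ^ 2 := by
    simp only [EuclideanSpace.real_norm_sq_eq, Finset.sum_mul_sum, mul_pow]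
  rw [h2] at h
  have h0 : 0 ≤ ∑ i, ∑ j, (A i j) ^ 2 :=
    Finset.sum_nonneg fun i _ => Finset.sum_nonneg fun j _ => sq_nonneg _
  refine abs_le_of_sq_le_sq ?_ (by unfold frobNorm; positivity)
  rw [mul_pow, frobNorm, Real.sq_sqrt h0, mul_pow]
  linarith

/-- For orthogonal `a`, `b`, multiples of the identity do not contribute to `D²ψ(u)(a, b)`. -/
lemma abs_hess_apply_le (ψ : E3 → ℝ) (u a b : E3) (hab : ⟪a, b⟫ = 0) (c : ℝ) :
    |iteratedFDeriv ℝ 2 ψ u ![a, b]| ≤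
      frobNorm (hessMat ψ u - c • (1 : Matrix (Fin 3) (Fin 3) ℝ)) * (‖a‖ * ‖b‖) := by
  refine le_of_eq_of_le ?_ (abs_bilin_le _ a b)
  congr 1
  rw [hess_apply_eq_sum]
  simp only [PiLp.inner_apply, Fin.sum_univ_three, RCLike.inner_apply, conj_trivial] at hab
  simp [Fin.sum_univ_three, Matrix.one_apply]
  linear_combination c * hab

lemma frobNorm_nonneg (A : Matrix (Fin 3) (Fin 3) ℝ) : 0 ≤ frobNorm A := Real.sqrt_nonneg _

lemma frobNorm_le (A : Matrix (Fin 3) (Fin 3) ℝ) (K : ℝ) (h : ∀ i j, |A i j| ≤ K) :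
    frobNorm A ≤ 3 * K := by
  have hK : 0 ≤ K := (abs_nonneg _).trans (h 0 0)
  refine Real.sqrt_le_iff.2 ⟨by positivity, ?_⟩
  calc ∑ i, ∑ j, (A i j) ^ 2 ≤ ∑ _i : Fin 3, ∑ _j : Fin 3, K ^ 2 :=
        Finset.sum_le_sum fun i _ => Finset.sum_le_sum fun j _ =>
          sq_le_sq.2 ((h i j).trans (le_abs_self K))
    _ = (3 * K) ^ 2 := by simp; ring

/-- The matrices `D²ψ(u) - c I` are bounded uniformly in `u`; this makes the suprema in
`hessSupNorm` and `hessStarNorm` genuine. -/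
lemma exists_frobNorm_bound (ψ : E3 → ℝ)
    (h : ∃ C : ℝ, ∀ u : E3, ‖iteratedFDeriv ℝ 2 ψ u‖ ≤ C) (c : ℝ) :
    ∃ K : ℝ, ∀ u, frobNorm (hessMat ψ u - c • (1 : Matrix (Fin 3) (Fin 3) ℝ)) ≤ K := by
  obtain ⟨C, hC⟩ := h
  refine ⟨3 * (C + |c|), fun u => frobNorm_le _ _ fun i j => ?_⟩
  have h1 : |hessMat ψ u i j| ≤ C := by
    have := (iteratedFDeriv ℝ 2 ψ u).le_opNorm
      ![EuclideanSpace.single i (1 : ℝ), EuclideanSpace.single j (1 : ℝ)]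
    simp [Fin.prod_univ_two] at this
    exact this.trans (hC u)
  have h2 : |(c • (1 : Matrix (Fin 3) (Fin 3) ℝ)) i j| ≤ |c| := by
    by_cases hij : i = j <;> simp [hij]
  rw [Matrix.sub_apply]
  exact (abs_sub _ _).trans (add_le_add h1 h2)

lemma frobNorm_le_hessSupNorm (ψ : E3 → ℝ)
    (h : ∃ C : ℝ, ∀ u : E3, ‖iteratedFDeriv ℝ 2 ψ u‖ ≤ C) (u : E3) :
    frobNorm (hessMat ψ u) ≤ hessSupNorm ψ := by
  obtain ⟨K, hK⟩ := exists_frobNorm_bound ψ h 0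
  simp only [zero_smul, sub_zero] at hK
  exact le_ciSup (f := fun u => frobNorm (hessMat ψ u)) ⟨K, by rintro _ ⟨x, rfl⟩; exact hK x⟩ u

lemma frobNorm_le_hessStarNorm (ψ : E3 → ℝ)
    (h : ∃ C : ℝ, ∀ u : E3, ‖iteratedFDeriv ℝ 2 ψ u‖ ≤ C) (v w u : E3)
    (hu : ‖u‖ ≤ Real.sqrt (‖v‖ ^ 2 + ‖w‖ ^ 2)) :
    frobNorm (hessMat ψ u -
        ((1 / 3) * Matrix.trace (hessMat ψ 0)) • (1 : Matrix (Fin 3) (Fin 3) ℝ)) ≤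
      hessStarNorm ψ * (1 + ‖v‖ ^ 2 + ‖w‖ ^ 2) ^ ((1 / 4 : ℝ)) := by
  obtain ⟨K, hK⟩ := exists_frobNorm_bound ψ h ((1 / 3) * Matrix.trace (hessMat ψ 0))
  have hK0 : 0 ≤ K := (frobNorm_nonneg _).trans (hK 0)
  set F : E3 → ℝ := fun u => frobNorm (hessMat ψ u -
    ((1 / 3) * Matrix.trace (hessMat ψ 0)) • (1 : Matrix (Fin 3) (Fin 3) ℝ)) with hF
  have h1 : F u ≤ ⨆ x : {x : E3 // ‖x‖ ≤ Real.sqrt (‖v‖ ^ 2 + ‖w‖ ^ 2)}, F x :=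
    le_ciSup (f := fun x : {x : E3 // ‖x‖ ≤ Real.sqrt (‖v‖ ^ 2 + ‖w‖ ^ 2)} => F x)
      ⟨K, by rintro _ ⟨x, rfl⟩; exact hK x⟩ ⟨u, hu⟩
  have h2 : (1 + ‖v‖ ^ 2 + ‖w‖ ^ 2) ^ (-(1 / 4 : ℝ)) *
      (⨆ x : {x : E3 // ‖x‖ ≤ Real.sqrt (‖v‖ ^ 2 + ‖w‖ ^ 2)}, F x) ≤ hessStarNorm ψ := by
    refine le_ciSup (f := fun p : E3 × E3 => (1 + ‖p.1‖ ^ 2 + ‖p.2‖ ^ 2) ^ (-(1 / 4 : ℝ)) *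
      ⨆ x : {x : E3 // ‖x‖ ≤ Real.sqrt (‖p.1‖ ^ 2 + ‖p.2‖ ^ 2)}, F x) ⟨K, ?_⟩ (v, w)
    rintro _ ⟨p, rfl⟩
    have h3 : (1 + ‖p.1‖ ^ 2 + ‖p.2‖ ^ 2) ^ (-(1 / 4 : ℝ)) ≤ 1 :=
      Real.rpow_le_one_of_one_le_of_nonpos
        (by nlinarith [sq_nonneg ‖p.1‖, sq_nonneg ‖p.2‖]) (by norm_num)
    have h4 : (⨆ x : {x : E3 // ‖x‖ ≤ Real.sqrt (‖p.1‖ ^ 2 + ‖p.2‖ ^ 2)}, F x) ≤ K :=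
      Real.iSup_le (fun x => hK x) hK0
    have h5 : 0 ≤ ⨆ x : {x : E3 // ‖x‖ ≤ Real.sqrt (‖p.1‖ ^ 2 + ‖p.2‖ ^ 2)}, F x :=
      Real.iSup_nonneg fun x => frobNorm_nonneg _
    exact (mul_le_of_le_one_left h5 h3).trans h4
  have hpos : 0 < 1 + ‖v‖ ^ 2 + ‖w‖ ^ 2 := by positivity
  have h6 := mul_le_mul_of_nonneg_right h2 (Real.rpow_nonneg hpos.le (1 / 4 : ℝ))
  rw [mul_right_comm, ← Real.rpow_add hpos] at h6
  norm_num at h6 h1 ⊢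
  exact h1.trans h6

/-- The rectangle lies in the ball centred at the origin whose squared radius is the sum of the
squared norms of two opposite vertices. -/
lemma norm_rectangle_le (w a b : E3) (hab : ⟪a, b⟫ = 0) (s t : ℝ)
    (hs : s ∈ Set.Icc (0 : ℝ) 1) (ht : t ∈ Set.Icc (0 : ℝ) 1) :
    ‖w + s • b + t • a‖ ≤ Real.sqrt (‖w + b + a‖ ^ 2 + ‖w‖ ^ 2) := by
  set R := Real.sqrt (‖w + b + a‖ ^ 2 + ‖w‖ ^ 2) with hR
  have hsum : ‖w + a‖ ^ 2 + ‖w + b‖ ^ 2 = ‖w + b + a‖ ^ 2 + ‖w‖ ^ 2 := by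
    simp only [norm_add_sq_real, inner_add_left, real_inner_comm a b, hab]
    ring
  have hv : ‖w + b + a‖ ≤ R := Real.le_sqrt_of_sq_le (by nlinarith [sq_nonneg ‖w‖])
  have hw : ‖w‖ ≤ R := Real.le_sqrt_of_sq_le (by nlinarith [sq_nonneg ‖w + b + a‖])
  have ha : ‖w + a‖ ≤ R := Real.le_sqrt_of_sq_le (by nlinarith [sq_nonneg ‖w + b‖])
  have hb : ‖w + b‖ ≤ R := Real.le_sqrt_of_sq_le (by nlinarith [sq_nonneg ‖w + a‖])
  have hconv : ∀ (x y : E3) (r : ℝ), r ∈ Set.Icc (0 : ℝ) 1 → ‖x‖ ≤ R → ‖x + y‖ ≤ R →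
      ‖x + r • y‖ ≤ R := by
    intro x y r hr hx hy
    have := (convex_closedBall (0 : E3) R).add_smul_mem (x := x) (y := y) (t := r)
      (by simpa using hx) (by simpa using hy) hr
    simpa using this
  refine hconv _ _ t ht (hconv _ _ s hs hw hb) ?_
  rw [add_right_comm]
  exact hconv _ _ s hs ha (by rwa [add_right_comm])

/-- For `ψ ∈ C²_b(ℝ³)`, for all `v ≠ v_*` and all `ω ∈ S²`,
`|Δψ(v',v'_*,v,v_*)| ≤ C*_ψ(v,v_*) |v-v_*|² |sin θ cos θ|`
where `θ = arccos(n·ω)`, `n = (v-v_*)/|v-v_*|`, and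
`v' = v - ((v-v_*)·ω)ω`, `v'_* = v_* + ((v-v_*)·ω)ω`. -/
theorem stmt0 (ψ : E3 → ℝ) (hψ : ContDiff ℝ 2 ψ)
    (hbd : ∀ i : ℕ, i ≤ 2 → ∃ C : ℝ, ∀ u : E3, ‖iteratedFDeriv ℝ i ψ u‖ ≤ C)
    (v w : E3) (hvw : v ≠ w) (ω : E3) (hω : ‖ω‖ = 1) :
    |ψ (v - ⟪v - w, ω⟫ • ω) + ψ (w + ⟪v - w, ω⟫ • ω) - ψ v - ψ w| ≤
      Cstar ψ v w * ‖v - w‖ ^ 2 *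
        |Real.sin (Real.arccos ⟪‖v - w‖⁻¹ • (v - w), ω⟫) *
          Real.cos (Real.arccos ⟪‖v - w‖⁻¹ • (v - w), ω⟫)| := by
  set p : ℝ := ⟪v - w, ω⟫ with hp
  set a : E3 := p • ω with ha
  set b : E3 := v - w - a with hb
  have hab : ⟪a, b⟫ = 0 := by
    rw [hb, ha, inner_sub_right, real_inner_smul_left, real_inner_smul_left, real_inner_smul_right,
      real_inner_self_eq_norm_sq, hω, real_inner_comm, ← hp]
    ring
  have hd : 0 < ‖v - w‖ := norm_pos_iff.2 (sub_ne_zero.2 hvw)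
  have hna : ‖a‖ = |p| := by rw [ha, norm_smul, hω, mul_one, Real.norm_eq_abs]
  have hnb : ‖b‖ = Real.sqrt (‖v - w‖ ^ 2 - p ^ 2) := by
    have h1 : ‖v - w‖ ^ 2 = ‖a‖ ^ 2 + ‖b‖ ^ 2 := by
      rw [show v - w = a + b by rw [hb]; abel, norm_add_sq_real, hab]
      ring
    rw [h1, hna, sq_abs, add_sub_cancel_left, Real.sqrt_sq (norm_nonneg _)]
  have hpd : |p| ≤ ‖v - w‖ := by simpa [hω] using abs_real_inner_le_norm (v - w) ω
  have hangle : ‖v - w‖ ^ 2 * |Real.sin (Real.arccos ⟪‖v - w‖⁻¹ • (v - w), ω⟫) *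
      Real.cos (Real.arccos ⟪‖v - w‖⁻¹ • (v - w), ω⟫)| = ‖a‖ * ‖b‖ := by
    rw [real_inner_smul_left, ← hp]
    have hx : |‖v - w‖⁻¹ * p| ≤ 1 := by
      rw [abs_mul, abs_of_pos (inv_pos.2 hd), inv_mul_le_iff₀ hd, mul_one]
      exact hpd
    rw [Real.cos_arccos (abs_le.1 hx).1 (abs_le.1 hx).2, Real.sin_arccos, hna, hnb, abs_mul,
      abs_mul, abs_of_nonneg (Real.sqrt_nonneg _), abs_of_pos (inv_pos.2 hd),
      show ‖v - w‖ ^ 2 - p ^ 2 = ‖v - w‖ ^ 2 * (1 - (‖v - w‖⁻¹ * p) ^ 2) by field_simp,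
      Real.sqrt_mul (sq_nonneg _), Real.sqrt_sq hd.le]
    field_simp
  rw [mul_assoc, hangle]
  have hv : w + b + a = v := by rw [hb]; abel
  obtain ⟨s, hs, t, ht, hst⟩ := exists_mixed_difference_eq ψ hψ w a b
  have hu := norm_rectangle_le w a b hab s t hs ht
  rw [hv] at hst hu
  have hΔ : ψ (v - a) + ψ (w + a) - ψ v - ψ w =
      -iteratedFDeriv ℝ 2 ψ (w + s • b + t • a) ![a, b] := by
    rw [← hst, show v - a = w + b by rw [hb]; abel]
    ring
  rw [hΔ, abs_neg]
  have hn : 0 ≤ ‖a‖ * ‖b‖ := by positivity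
  rw [Cstar, min_mul_of_nonneg _ _ hn]
  refine le_min ?_ ?_
  · have h0 := abs_hess_apply_le ψ (w + s • b + t • a) a b hab 0
    rw [zero_smul, sub_zero] at h0
    exact h0.trans (mul_le_mul_of_nonneg_right
      (frobNorm_le_hessSupNorm ψ (hbd 2 le_rfl) _) hn)
  · exact (abs_hess_apply_le ψ (w + s • b + t • a) a b hab _).trans
      (mul_le_mul_of_nonneg_right (frobNorm_le_hessStarNorm ψ (hbd 2 le_rfl) v w _ hu) hn)

end
end

section
/- Let ψ ∈ C²_b(ℝ³), let v, v_* ∈ ℝ³ with v ≠ v_*, set n = (v−v_*)/|v−v_*|, let θ ∈ [0, π], and let e₁, e₂ be any two orthonormal vectors of ℝ³ perpendicular to n. For φ ∈ [0, 2π] set σ(φ) = cos φ · e₁ + sin φ · e₂, v'(φ) = sin²θ·v + cos²θ·v_* − |v−v_*| cos θ sin θ · σ(φ), and v'_*(φ) = cos²θ·v + sin²θ·v_* + |v−v_*| cos θ sin θ · σ(φ). Then |∫₀^{2π} (ψ(v'(φ)) + ψ(v'_*(φ)) − ψ(v) − ψ(v_*)) dφ| ≤ 8π · C*_ψ(v,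 v_*) · |v − v_*|² · sin²θ cos²θ. -/
/-!
The collision preserves the kinetic energy, so `ψ` may be replaced by `g = ψ - l |u|² / 2` for any
real `l` without changing the integrand; `l = 0` gives the bound by `‖D²ψ‖_∞` and
`l = Tr D²ψ(0) / 3` the one by `‖D²ψ‖_*`. By energy conservation all points involved lie in the ball
of radius `√(|v|² + |v_*|²)`, where `|D²g| ≤ M`. Write `v' = a - ρ σ`, `v'_* = b + ρ σ` with `a`, `b`
on the segment between `v_*` and `v` and `ρ = |v - v_*| cos θ sin θ`. Taylor expansion at `a` and `b`
costs at most `M ρ²` each (`taylor_bound`), and its first order terms vanish after integration over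
the circle. The remaining `g a + g b - g v - g v_*` is a second difference with steps
`sin² θ (v - v_*)` and `cos² θ (v - v_*)`, hence at most `M ρ²` (`second_diff_bound`). The total is
`2π · 3 M ρ² ≤ 8π M ρ²` (`circle_bound`).
-/

open MeasureTheory Real Filter
open scoped RealInnerProductSpace Topology

noncomputable section

/-- The operator norm of a bilinear form on `ℝ³` is at most the Frobenius norm of its matrix. -/
lemma opNorm_le_frobNorm (H : E3 →L[ℝ] E3 →L[ℝ] ℝ) (A : Matrix (Fin 3) (Fin 3) ℝ)
    (hA : ∀ i j, H (EuclideanSpace.single i 1) (EuclideanSpace.single j 1) = A i j) :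
    ‖H‖ ≤ frobNorm A := by
  refine H.opNorm_le_bound₂ (Real.sqrt_nonneg _) fun x y => ?_
  have hexp : ∀ z : E3, z = ∑ i, z i • EuclideanSpace.single i (1 : ℝ) := fun z => by
    ext k
    fin_cases k <;> simp [Fin.sum_univ_three]
  have hxy : H x y = ∑ i, ∑ j, A i j * (x i * y j) := by
    conv_lhs => rw [hexp x, hexp y]
    simp only [map_sum, map_smul, _root_.sum_apply,
      _root_.smul_apply, hA, smul_eq_mul, Finset.mul_sum]
    rw [Finset.sum_comm]
    exact Finset.sum_congr rfl fun i _ => Finset.sum_congr rfl fun j _ => by ring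
  have hcs := Finset.sum_mul_sq_le_sq_mul_sq (Finset.univ : Finset (Fin 3 × Fin 3))
    (fun p => A p.1 p.2) (fun p => x p.1 * y p.2)
  simp only [Fintype.sum_prod_type] at hcs
  have hnorm : ∑ i, ∑ j, (x i * y j) ^ 2 = (‖x‖ * ‖y‖) ^ 2 := by
    rw [mul_pow, EuclideanSpace.real_norm_sq_eq, EuclideanSpace.real_norm_sq_eq,
      Finset.sum_mul_sum]
    simp only [mul_pow]
  rw [hnorm, ← hxy] at hcs
  rw [Real.norm_eq_abs, mul_assoc]
  refine abs_le_of_sq_le_sq ?_ (by unfold frobNorm; positivity)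
  rw [mul_pow, frobNorm, Real.sq_sqrt (by positivity)]
  exact hcs

/-- First order Taylor estimate on a convex set where the gradient `G` of `g` is `M`-Lipschitz
(without the optimal factor `1/2`). -/
lemma taylor_bound {g : E3 → ℝ} {G : E3 → E3 →L[ℝ] ℝ} (hg : ∀ u, HasFDerivAt g (G u) u)
    {B : Set E3} (hB : Convex ℝ B) {M : ℝ} (hM : 0 ≤ M)
    (hG : ∀ x ∈ B, ∀ y ∈ B, ‖G y - G x‖ ≤ M * ‖y - x‖) {x y : E3} (hx : x ∈ B) (hy : y ∈ B) :
    |g y - g x - G x (y - x)| ≤ M * ‖y - x‖ ^ 2 := by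
  have := (hB.inter (convex_closedBall x ‖y - x‖)).norm_image_sub_le_of_norm_hasFDerivWithin_le'
    (f := g) (f' := G) (φ := G x) (C := M * ‖y - x‖) (x := x) (y := y)
    (fun u _ => (hg u).hasFDerivWithinAt) (fun u hu => (hG x hx u hu.1).trans (by
      have := mem_closedBall_iff_norm.1 hu.2
      gcongr)) ⟨hx, by simp⟩ ⟨hy, by simp [dist_eq_norm]⟩
  rw [Real.norm_eq_abs] at this
  linarith

/-- Second difference of `g` over a parallelogram with sides `p`, `q`. -/
lemma second_diff_bound {g : E3 → ℝ} {G : E3 → E3 →L[ℝ] ℝ} (hg : ∀ u, HasFDerivAt g (G u) u)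
    {B : Set E3} (hB : Convex ℝ B) {M : ℝ}
    (hG : ∀ x ∈ B, ∀ y ∈ B, ‖G y - G x‖ ≤ M * ‖y - x‖) {x p q : E3} (h0 : x ∈ B)
    (h1 : x + p ∈ B) (h2 : x + q ∈ B) (h3 : x + p + q ∈ B) :
    |g (x + p + q) - g (x + p) - g (x + q) + g x| ≤ M * ‖q‖ * ‖p‖ := by
  have := (hB.inter (hB.translate_preimage_left q)).norm_image_sub_le_of_norm_hasFDerivWithin_le
    (f := fun u => g (u + q) - g u) (f' := fun u => G (u + q) - G u) (C := M * ‖q‖)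
    (x := x) (y := x + p)
    (fun u _ => (((hasFDerivAt_comp_add_right q).2 (hg (u + q))).sub (hg u)).hasFDerivWithinAt)
    (fun u hu => (hG u hu.1 _ hu.2).trans (by simp)) ⟨h0, h2⟩ ⟨h1, h3⟩
  rw [Real.norm_eq_abs] at this
  simp only [add_sub_cancel_left] at this
  convert this using 2
  ring

/-- The collision rule preserves the kinetic energy. -/
lemma energy_identity (v w e₁ e₂ : E3) (he₁ : ‖e₁‖ = 1) (he₂ : ‖e₂‖ = 1) (he₁₂ : ⟪e₁, e₂⟫ = 0)
    (hne₁ : ⟪v - w, e₁⟫ = 0) (hne₂ : ⟪v - w, e₂⟫ = 0) (θ φ : ℝ) :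
    ‖Real.sin θ ^ 2 • v + Real.cos θ ^ 2 • w -
        (‖v - w‖ * Real.cos θ * Real.sin θ) • (Real.cos φ • e₁ + Real.sin φ • e₂)‖ ^ 2 +
      ‖Real.cos θ ^ 2 • v + Real.sin θ ^ 2 • w +
        (‖v - w‖ * Real.cos θ * Real.sin θ) • (Real.cos φ • e₁ + Real.sin φ • e₂)‖ ^ 2 =
      ‖v‖ ^ 2 + ‖w‖ ^ 2 := by
  set σ := Real.cos φ • e₁ + Real.sin φ • e₂ with hσdef
  set ρ := ‖v - w‖ * Real.cos θ * Real.sin θ with hρ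
  have hσ : ‖σ‖ ^ 2 = 1 := by
    rw [hσdef, norm_add_sq_real, norm_smul, norm_smul, inner_smul_left, inner_smul_right, he₁₂,
      he₁, he₂]
    simp
  have hdσ : ⟪v - w, σ⟫ = 0 := by
    rw [hσdef, inner_add_right, inner_smul_right, inner_smul_right, hne₁, hne₂]
    simp
  set P := Real.sin θ ^ 2 • v + Real.cos θ ^ 2 • w - ρ • σ
  set Q := Real.cos θ ^ 2 • v + Real.sin θ ^ 2 • w + ρ • σ
  have hsc := Real.sin_sq_add_cos_sq θ
  have hadd : P + Q = v + w := by
    have : P + Q = (Real.sin θ ^ 2 + Real.cos θ ^ 2) • (v + w) := by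
      simp only [P, Q]; module
    rw [this, hsc, one_smul]
  have hsub : P - Q = (Real.sin θ ^ 2 - Real.cos θ ^ 2) • (v - w) - (2 * ρ) • σ := by
    simp only [P, Q]; module
  have hsubn : ‖P - Q‖ ^ 2 = ‖v - w‖ ^ 2 := by
    rw [hsub, norm_sub_sq_real, inner_smul_left, inner_smul_right, hdσ, norm_smul, norm_smul,
      mul_pow, mul_pow, hσ, Real.norm_eq_abs, Real.norm_eq_abs, sq_abs, sq_abs, hρ]
    linear_combination ‖v - w‖ ^ 2 * (Real.sin θ ^ 2 + Real.cos θ ^ 2 + 1) * hsc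
  have h1 := parallelogram_law_with_norm ℝ P Q
  have h2 := parallelogram_law_with_norm ℝ v w
  rw [hadd] at h1
  nlinarith

/-- The estimate with `D²ψ` replaced by `D²ψ - l I` on the energy ball. Subtracting `l |u|² / 2`
from `ψ` does not change the integrand, since the collision preserves the kinetic energy. -/
lemma circle_bound (ψ : E3 → ℝ) (hψ : ContDiff ℝ 2 ψ)
    (v w : E3) (θ : ℝ)
    (e₁ e₂ : E3) (he₁ : ‖e₁‖ = 1) (he₂ : ‖e₂‖ = 1) (he₁₂ : ⟪e₁, e₂⟫ = 0)
    (hne₁ : ⟪v - w, e₁⟫ = 0) (hne₂ : ⟪v - w, e₂⟫ = 0) (l M : ℝ)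
    (hM : ∀ u : E3, ‖u‖ ≤ Real.sqrt (‖v‖ ^ 2 + ‖w‖ ^ 2) →
      frobNorm (hessMat ψ u - l • (1 : Matrix (Fin 3) (Fin 3) ℝ)) ≤ M) :
    |∫ φ in (0 : ℝ)..(2 * π),
        (ψ (Real.sin θ ^ 2 • v + Real.cos θ ^ 2 • w -
              (‖v - w‖ * Real.cos θ * Real.sin θ) • (Real.cos φ • e₁ + Real.sin φ • e₂)) +
         ψ (Real.cos θ ^ 2 • v + Real.sin θ ^ 2 • w +
              (‖v - w‖ * Real.cos θ * Real.sin θ) • (Real.cos φ • e₁ + Real.sin φ • e₂)) -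
         ψ v - ψ w)| ≤
      8 * π * M * ‖v - w‖ ^ 2 * Real.sin θ ^ 2 * Real.cos θ ^ 2 := by
  set R := Real.sqrt (‖v‖ ^ 2 + ‖w‖ ^ 2) with hR
  have hM0 : 0 ≤ M := (Real.sqrt_nonneg _).trans (hM 0 (by simp [hR]))
  let I : E3 →L[ℝ] E3 →L[ℝ] ℝ := innerSL ℝ
  have hI : ∀ x y, I x y = ⟪x, y⟫ := fun x y => rfl
  set g : E3 → ℝ := fun u => ψ u - l / 2 * ‖u‖ ^ 2 with hgdef
  set G : E3 → E3 →L[ℝ] ℝ := fun u => fderiv ℝ ψ u - l • I u with hGdef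
  have hg : ∀ u, HasFDerivAt g (G u) u := fun u => by
    have h1 := (hψ.differentiable (by norm_num) u).hasFDerivAt
    have h2 := ((hasStrictFDerivAt_norm_sq u).hasFDerivAt).const_mul (l / 2)
    refine (h1.sub h2).congr_fderiv ?_
    ext y
    simp [G, hI]
    ring
  have hGd : ∀ u, HasFDerivAt G (fderiv ℝ (fderiv ℝ ψ) u - l • I) u := fun u => by
    have h1 : Differentiable ℝ (fderiv ℝ ψ) :=
      (hψ.fderiv_right (m := 1) (by norm_num)).differentiable (by norm_num)
    exact (h1 u).hasFDerivAt.sub (I.hasFDerivAt.const_smul l)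
  set B := Metric.closedBall (0 : E3) R with hBdef
  have hB : Convex ℝ B := convex_closedBall _ _
  have hmem : ∀ u : E3, ‖u‖ ^ 2 ≤ ‖v‖ ^ 2 + ‖w‖ ^ 2 → u ∈ B := fun u hu => by
    rw [hBdef, mem_closedBall_zero_iff]
    exact Real.le_sqrt_of_sq_le hu
  have hGB : ∀ x ∈ B, ∀ y ∈ B, ‖G y - G x‖ ≤ M * ‖y - x‖ := fun x hx y hy => by
    refine hB.norm_image_sub_le_of_norm_hasFDerivWithin_le
      (fun u _ => (hGd u).hasFDerivWithinAt) (fun u hu => ?_) hx hy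
    refine (opNorm_le_frobNorm _ _ fun i j => ?_).trans (hM u (mem_closedBall_zero_iff.1 hu))
    simp [hessMat, iteratedFDeriv_two_apply, hI, Matrix.one_apply, EuclideanSpace.inner_single_left]
  have hsc := Real.sin_sq_add_cos_sq θ
  set d := v - w with hd
  set ρ := ‖d‖ * Real.cos θ * Real.sin θ with hρ
  set a := Real.sin θ ^ 2 • v + Real.cos θ ^ 2 • w with ha
  set b := Real.cos θ ^ 2 • v + Real.sin θ ^ 2 • w with hb
  let σ : ℝ → E3 := fun φ => Real.cos φ • e₁ + Real.sin φ • e₂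
  have hσ : ∀ φ, ‖σ φ‖ ^ 2 = 1 := fun φ => by
    simp only [σ]
    rw [norm_add_sq_real, norm_smul, norm_smul, inner_smul_left, inner_smul_right, he₁₂, he₁, he₂]
    simp
  have hen : ∀ φ, ‖a - ρ • σ φ‖ ^ 2 + ‖b + ρ • σ φ‖ ^ 2 = ‖v‖ ^ 2 + ‖w‖ ^ 2 := fun φ =>
    energy_identity v w e₁ e₂ he₁ he₂ he₁₂ hne₁ hne₂ θ φ
  have hvB : v ∈ B := hmem v (by nlinarith [sq_nonneg ‖w‖])
  have hwB : w ∈ B := hmem w (by nlinarith [sq_nonneg ‖v‖])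
  have haB : a ∈ B := hB hvB hwB (sq_nonneg _) (sq_nonneg _) hsc
  have hbB : b ∈ B := hB hvB hwB (sq_nonneg _) (sq_nonneg _) (by rw [add_comm, hsc])
  have hx1 : w + Real.sin θ ^ 2 • d = a := by
    have : w = (Real.sin θ ^ 2 + Real.cos θ ^ 2) • w := by rw [hsc, one_smul]
    rw [ha, hd]; nth_rw 1 [this]; module
  have hx2 : w + Real.cos θ ^ 2 • d = b := by
    have : w = (Real.sin θ ^ 2 + Real.cos θ ^ 2) • w := by rw [hsc, one_smul]
    rw [hb, hd]; nth_rw 1 [this]; module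
  have hx3 : w + Real.sin θ ^ 2 • d + Real.cos θ ^ 2 • d = v := by
    rw [add_assoc, ← add_smul, hsc, one_smul, hd]; abel
  -- The part of the increment along the line through `v` and `w`.
  have hline : |g a + g b - g v - g w| ≤ M * ρ ^ 2 := by
    have := second_diff_bound hg hB hGB (x := w) (p := Real.sin θ ^ 2 • d)
      (q := Real.cos θ ^ 2 • d) hwB (hx1 ▸ haB) (hx2 ▸ hbB) (hx3 ▸ hvB)
    rw [hx3, hx1, hx2, norm_smul, norm_smul, Real.norm_eq_abs, Real.norm_eq_abs,
      abs_of_nonneg (sq_nonneg (Real.sin θ)), abs_of_nonneg (sq_nonneg (Real.cos θ))] at this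
    rw [← abs_neg]
    convert this using 1
    · congr 1; ring
    · rw [hρ]; ring
  let L : E3 →L[ℝ] ℝ := ρ • (G b - G a)
  have hpt : ∀ φ, |(ψ (a - ρ • σ φ) + ψ (b + ρ • σ φ) - ψ v - ψ w) - L (σ φ)|
      ≤ 3 * M * ρ ^ 2 := fun φ => by
    have h1 := taylor_bound hg hB hM0 hGB haB
      (hmem (a - ρ • σ φ) (by nlinarith [hen φ, sq_nonneg ‖b + ρ • σ φ‖]))
    have h2 := taylor_bound hg hB hM0 hGB hbB
      (hmem (b + ρ • σ φ) (by nlinarith [hen φ, sq_nonneg ‖a - ρ • σ φ‖]))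
    have hn : ‖ρ • σ φ‖ ^ 2 = ρ ^ 2 := by
      rw [norm_smul, mul_pow, hσ, Real.norm_eq_abs, sq_abs, mul_one]
    rw [sub_sub_cancel_left, norm_neg, hn, map_neg, map_smul, smul_eq_mul] at h1
    rw [add_sub_cancel_left, hn, map_smul, smul_eq_mul] at h2
    have hkey : (ψ (a - ρ • σ φ) + ψ (b + ρ • σ φ) - ψ v - ψ w) - L (σ φ) =
        (g (a - ρ • σ φ) - g a - -(ρ * G a (σ φ))) + (g (b + ρ • σ φ) - g b - ρ * G b (σ φ))
          + (g a + g b - g v - g w) := by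
      have hL : L (σ φ) = ρ * (G b (σ φ) - G a (σ φ)) := by simp [L]
      rw [hL]
      simp only [hgdef]
      linear_combination l / 2 * hen φ
    rw [hkey]
    refine (abs_add_le _ _).trans ?_
    have := abs_add_le (g (a - ρ • σ φ) - g a - -(ρ * G a (σ φ)))
      (g (b + ρ • σ φ) - g b - ρ * G b (σ φ))
    linarith
  have hψc := hψ.continuous
  have hσc : Continuous σ := by fun_prop
  -- The first order terms average out over the circle.
  have hL0 : ∫ φ in (0 : ℝ)..(2 * π), L (σ φ) = 0 := by
    have : ∀ φ, L (σ φ) = Real.cos φ * L e₁ + Real.sin φ * L e₂ := fun φ => by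
      simp only [σ, map_add, map_smul, smul_eq_mul]
    simp only [this]
    rw [intervalIntegral.integral_add (Continuous.intervalIntegrable (by fun_prop) _ _)
      (Continuous.intervalIntegrable (by fun_prop) _ _)]
    simp
  have hint := intervalIntegral.norm_integral_le_of_norm_le_const (a := 0) (b := 2 * π)
    (f := fun φ => (ψ (a - ρ • σ φ) + ψ (b + ρ • σ φ) - ψ v - ψ w) - L (σ φ))
    (fun φ _ => hpt φ)
  rw [intervalIntegral.integral_sub (Continuous.intervalIntegrable (by fun_prop) _ _)
    (Continuous.intervalIntegrable (by fun_prop) _ _), hL0, sub_zero, sub_zero,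
    Real.norm_eq_abs, abs_of_pos Real.two_pi_pos] at hint
  refine hint.trans ?_
  have h0 : 0 ≤ π * M * ρ ^ 2 := by positivity
  have h1 : ρ ^ 2 = ‖d‖ ^ 2 * Real.sin θ ^ 2 * Real.cos θ ^ 2 := by rw [hρ]; ring
  calc 3 * M * ρ ^ 2 * (2 * π) = 6 * (π * M * ρ ^ 2) := by ring
    _ ≤ 8 * (π * M * ρ ^ 2) := by linarith
    _ = _ := by rw [h1]; ring

/-- The shifted Hessians are uniformly bounded, so the suprema in the definitions of
`hessSupNorm` and `hessStarNorm` are genuine. -/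
lemma frobNorm_hess_bdd (ψ : E3 → ℝ) (l : ℝ)
    (hbd : ∃ C : ℝ, ∀ u : E3, ‖iteratedFDeriv ℝ 2 ψ u‖ ≤ C) :
    ∃ K : ℝ, ∀ u, frobNorm (hessMat ψ u - l • (1 : Matrix (Fin 3) (Fin 3) ℝ)) ≤ K := by
  obtain ⟨C, hC⟩ := hbd
  refine ⟨Real.sqrt (∑ _i : Fin 3, ∑ _j : Fin 3, (C + |l|) ^ 2), fun u => ?_⟩
  refine Real.sqrt_le_sqrt (Finset.sum_le_sum fun i _ => Finset.sum_le_sum fun j _ => ?_)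
  refine sq_le_sq.2 (le_trans ?_ (le_abs_self _))
  rw [Matrix.sub_apply, Matrix.smul_apply, smul_eq_mul]
  refine (abs_sub _ _).trans (add_le_add ?_ ?_)
  · have := (iteratedFDeriv ℝ 2 ψ u).le_opNorm
      ![EuclideanSpace.single i (1 : ℝ), EuclideanSpace.single j (1 : ℝ)]
    simp [Fin.prod_univ_two] at this
    exact this.trans (hC u)
  · rw [abs_mul]
    refine mul_le_of_le_one_right (abs_nonneg _) ?_
    rw [Matrix.one_apply]
    split_ifs <;> simp

/-- For `ψ ∈ C²_b(ℝ³)`, `v ≠ v_*`, `θ ∈ [0,π]` and `e₁, e₂` orthonormal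
vectors perpendicular to `n = (v-v_*)/|v-v_*|`, the integral over the great circle
`σ(φ) = cos φ e₁ + sin φ e₂` of `Δψ` is bounded by
`8π C*_ψ(v,v_*) |v-v_*|² sin²θ cos²θ`. -/
theorem stmt1 (ψ : E3 → ℝ) (hψ : ContDiff ℝ 2 ψ)
    (hbd : ∀ i : ℕ, i ≤ 2 → ∃ C : ℝ, ∀ u : E3, ‖iteratedFDeriv ℝ i ψ u‖ ≤ C)
    (v w : E3) (hvw : v ≠ w) (θ : ℝ) (hθ : θ ∈ Set.Icc 0 π)
    (e₁ e₂ : E3) (he₁ : ‖e₁‖ = 1) (he₂ : ‖e₂‖ = 1) (he₁₂ : ⟪e₁, e₂⟫ = 0)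
    (hne₁ : ⟪v - w, e₁⟫ = 0) (hne₂ : ⟪v - w, e₂⟫ = 0) :
    |∫ φ in (0 : ℝ)..(2 * π),
        (ψ (Real.sin θ ^ 2 • v + Real.cos θ ^ 2 • w -
              (‖v - w‖ * Real.cos θ * Real.sin θ) • (Real.cos φ • e₁ + Real.sin φ • e₂)) +
         ψ (Real.cos θ ^ 2 • v + Real.sin θ ^ 2 • w +
              (‖v - w‖ * Real.cos θ * Real.sin θ) • (Real.cos φ • e₁ + Real.sin φ • e₂)) -
         ψ v - ψ w)| ≤
      8 * π * Cstar ψ v w * ‖v - w‖ ^ 2 * Real.sin θ ^ 2 * Real.cos θ ^ 2 := by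
  have hb2 := hbd 2 le_rfl
  have key := circle_bound ψ hψ v w θ e₁ e₂ he₁ he₂ he₁₂ hne₁ hne₂
  unfold Cstar
  rcases min_choice (hessSupNorm ψ)
    (hessStarNorm ψ * (1 + ‖v‖ ^ 2 + ‖w‖ ^ 2) ^ ((1 / 4 : ℝ))) with h | h <;> rw [h]
  · refine key 0 _ fun u _ => ?_
    obtain ⟨K, hK⟩ := frobNorm_hess_bdd ψ 0 hb2
    simp only [zero_smul, sub_zero] at hK ⊢
    exact le_ciSup (f := fun u => frobNorm (hessMat ψ u)) ⟨K, by rintro _ ⟨u, rfl⟩; exact hK u⟩ u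
  · refine key ((1 / 3) * Matrix.trace (hessMat ψ 0)) _ fun u hu => ?_
    obtain ⟨K, hK⟩ := frobNorm_hess_bdd ψ ((1 / 3) * Matrix.trace (hessMat ψ 0)) hb2
    have hK0 : 0 ≤ K := (Real.sqrt_nonneg _).trans (hK 0)
    have hpos : 0 < 1 + ‖v‖ ^ 2 + ‖w‖ ^ 2 := by positivity
    have hinner := le_ciSup (f := fun u : {u : E3 // ‖u‖ ≤ Real.sqrt (‖v‖ ^ 2 + ‖w‖ ^ 2)} =>
        frobNorm (hessMat ψ u -
          ((1 / 3) * Matrix.trace (hessMat ψ 0)) • (1 : Matrix (Fin 3) (Fin 3) ℝ)))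
      ⟨K, by rintro _ ⟨u, rfl⟩; exact hK u⟩ ⟨u, hu⟩
    have houter := le_ciSup (f := fun p : E3 × E3 =>
      (1 + ‖p.1‖ ^ 2 + ‖p.2‖ ^ 2) ^ (-(1 / 4 : ℝ)) *
        ⨆ u : {u : E3 // ‖u‖ ≤ Real.sqrt (‖p.1‖ ^ 2 + ‖p.2‖ ^ 2)},
          frobNorm (hessMat ψ u -
            ((1 / 3) * Matrix.trace (hessMat ψ 0)) • (1 : Matrix (Fin 3) (Fin 3) ℝ)))
      ⟨K, by
        rintro _ ⟨p, rfl⟩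
        have h1 : (1 + ‖p.1‖ ^ 2 + ‖p.2‖ ^ 2) ^ (-(1 / 4 : ℝ)) ≤ 1 :=
          Real.rpow_le_one_of_one_le_of_nonpos
            (by nlinarith [sq_nonneg ‖p.1‖, sq_nonneg ‖p.2‖]) (by norm_num)
        have h2 := Real.iSup_le (f := fun u : {u : E3 // ‖u‖ ≤ Real.sqrt (‖p.1‖ ^ 2 + ‖p.2‖ ^ 2)} =>
          frobNorm (hessMat ψ u -
            ((1 / 3) * Matrix.trace (hessMat ψ 0)) • (1 : Matrix (Fin 3) (Fin 3) ℝ)))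
          (fun u => hK u) hK0
        exact (mul_le_mul_of_nonneg_left h2 (by positivity)).trans
          (mul_le_of_le_one_left hK0 h1)⟩ (v, w)
    refine hinner.trans ?_
    -- Undo the weight: `X = X * t ^ (-1/4) * t ^ (1/4)`.
    have hX := mul_le_mul_of_nonneg_right houter
      (Real.rpow_nonneg hpos.le (1 / 4 : ℝ))
    rw [mul_right_comm, ← Real.rpow_add hpos] at hX
    simpa [hessStarNorm] using hX

end
end

section
/- Let φ̂ : [0,∞) → ℝ be Borel measurable with ∫₀^∞ r³ φ̂(r)² dr = 1/(2π), and let α > 0. Define, for ε > 0, A*_φ̂(ε) := sup_{ρ ≥ 0} (min(ρ^{1/2},1)) ∫_{ρ/ε}^∞ r³ φ̂(r)² dr and A*_{φ̂,α}(ε) := sup_{ρ > 0} (min(ρ^{1/2},1)) ∫₀^{ρ/ε} (εr/ρ)^α r³ φ̂(r)² dr. Then 0 ≤ A*_φ̂(ε) ≤ 1/(2π) and 0 ≤ A*_{φ̂,α}(ε) ≤ 1/(2π) for all ε > 0, and lim_{ε→0⁺} A*_φ̂(ε) = 0 and lim_{ε→0⁺} A*_{φ̂,α}(ε) = 0. 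-/
/-!
Write `g r = r³ φ̂(r)²` and `M = ∫₀^∞ g`; since `M = 1/(2π) ≠ 0`, `g` is integrable. With `s = εr/ρ`,
both integrals are of the form `∫₀^∞ k(s) g(r) dr` with `k(s) = 1_{s > 1}`, respectively
`k(s) = s^α 1_{s ≤ 1}`, and both kernels are at most `min(1,s)^α`. Hence both are bounded by
`I(ε/ρ)`, where `I(t) = ∫₀^∞ min(1,tr)^α g(r) dr` (`truncMoment`) is nondecreasing, at most `M`,
and tends to `0` as `t → 0⁺` by dominated convergence. Splitting at `ρ = √ε` gives
`min(√ρ,1) I(ε/ρ) ≤ ε^{1/4} M + I(√ε)` uniformly in `ρ`, and the right-hand side tends to `0`.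
-/

open MeasureTheory Real Filter
open scoped Topology

noncomputable section

/-- `A*_φ̂(ε) = sup_{ρ ≥ 0} min(ρ^{1/2},1) ∫_{ρ/ε}^∞ r³ φ̂(r)² dr`. -/
noncomputable def Astar (φh : ℝ → ℝ) (ε : ℝ) : ℝ :=
  ⨆ ρ : {x : ℝ // 0 ≤ x},
    min (Real.sqrt ρ) 1 * ∫ r in Set.Ioi ((ρ : ℝ) / ε), r ^ 3 * (φh r) ^ 2

/-- `A*_{φ̂,α}(ε) = sup_{ρ > 0} min(ρ^{1/2},1) ∫₀^{ρ/ε} (εr/ρ)^α r³ φ̂(r)² dr`. -/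
noncomputable def AstarAlpha (φh : ℝ → ℝ) (α ε : ℝ) : ℝ :=
  ⨆ ρ : {x : ℝ // 0 < x},
    min (Real.sqrt ρ) 1 *
      ∫ r in Set.Ioc (0 : ℝ) ((ρ : ℝ) / ε), (ε * r / (ρ : ℝ)) ^ α * (r ^ 3 * (φh r) ^ 2)

/-- The truncated moment `I(t) = ∫₀^∞ min(1,tr)^α g(r) dr`. -/
def truncMoment (g : ℝ → ℝ) (α t : ℝ) : ℝ :=
  ∫ r in Set.Ioi (0 : ℝ), (min 1 (t * r)) ^ α * g r

section

variable {g : ℝ → ℝ} {α : ℝ}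

lemma trunc_nonneg {t r : ℝ} (ht : 0 ≤ t) (hr : 0 < r) : 0 ≤ min 1 (t * r) :=
  le_min zero_le_one (by positivity)

lemma trunc_rpow_le_one (hα : 0 < α) {t r : ℝ} (ht : 0 ≤ t) (hr : 0 < r) :
    (min 1 (t * r)) ^ α ≤ 1 :=
  rpow_le_one (trunc_nonneg ht hr) (min_le_left _ _) hα.le

lemma measurable_trunc (t : ℝ) : Measurable fun r : ℝ => (min 1 (t * r)) ^ α := by
  fun_prop

lemma norm_trunc_mul_le (hα : 0 < α) (hg0 : ∀ r, 0 < r → 0 ≤ g r) {t : ℝ} (ht : 0 ≤ t) :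
    ∀ᵐ r ∂(volume.restrict (Set.Ioi (0 : ℝ))), ‖(min 1 (t * r)) ^ α * g r‖ ≤ g r := by
  filter_upwards [ae_restrict_mem measurableSet_Ioi] with r hr
  have h0 := hg0 r hr
  rw [norm_of_nonneg (mul_nonneg (rpow_nonneg (trunc_nonneg ht hr) _) h0)]
  exact mul_le_of_le_one_left h0 (trunc_rpow_le_one hα ht hr)

lemma integrableOn_trunc (hα : 0 < α) (hg0 : ∀ r, 0 < r → 0 ≤ g r)
    (hgi : IntegrableOn g (Set.Ioi 0)) {t : ℝ} (ht : 0 ≤ t) :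
    IntegrableOn (fun r => (min 1 (t * r)) ^ α * g r) (Set.Ioi 0) :=
  Integrable.mono' hgi ((measurable_trunc t).aestronglyMeasurable.mul hgi.aestronglyMeasurable)
    (norm_trunc_mul_le hα hg0 ht)

lemma truncMoment_nonneg (hg0 : ∀ r, 0 < r → 0 ≤ g r) {t : ℝ} (ht : 0 ≤ t) :
    0 ≤ truncMoment g α t :=
  setIntegral_nonneg measurableSet_Ioi fun r hr =>
    mul_nonneg (rpow_nonneg (trunc_nonneg ht hr) _) (hg0 r hr)

lemma truncMoment_le (hα : 0 < α) (hg0 : ∀ r, 0 < r → 0 ≤ g r)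
    (hgi : IntegrableOn g (Set.Ioi 0)) {t : ℝ} (ht : 0 ≤ t) :
    truncMoment g α t ≤ ∫ r in Set.Ioi (0 : ℝ), g r :=
  setIntegral_mono_on (integrableOn_trunc hα hg0 hgi ht) hgi measurableSet_Ioi fun r hr =>
    mul_le_of_le_one_left (hg0 r hr) (trunc_rpow_le_one hα ht hr)

lemma truncMoment_mono (hα : 0 < α) (hg0 : ∀ r, 0 < r → 0 ≤ g r)
    (hgi : IntegrableOn g (Set.Ioi 0)) {s t : ℝ} (hs : 0 ≤ s) (hst : s ≤ t) :
    truncMoment g α s ≤ truncMoment g α t :=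
  setIntegral_mono_on (integrableOn_trunc hα hg0 hgi hs)
    (integrableOn_trunc hα hg0 hgi (hs.trans hst)) measurableSet_Ioi fun r hr =>
    mul_le_mul_of_nonneg_right
      (rpow_le_rpow (trunc_nonneg hs hr)
        (min_le_min_left _ (mul_le_mul_of_nonneg_right hst (le_of_lt hr))) hα.le) (hg0 r hr)

lemma tendsto_truncMoment (hα : 0 < α) (hg0 : ∀ r, 0 < r → 0 ≤ g r)
    (hgi : IntegrableOn g (Set.Ioi 0)) :
    Tendsto (truncMoment g α) (𝓝[>] 0) (𝓝 0) := by
  have h : Tendsto (truncMoment g α) (𝓝[>] 0) (𝓝 (∫ _ in Set.Ioi (0 : ℝ), (0 : ℝ))) := by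
    refine tendsto_integral_filter_of_dominated_convergence g ?_ ?_ hgi ?_
    · exact Eventually.of_forall fun t =>
        (measurable_trunc t).aestronglyMeasurable.mul hgi.aestronglyMeasurable
    · filter_upwards [self_mem_nhdsWithin] with t ht
      exact norm_trunc_mul_le hα hg0 (le_of_lt ht)
    · refine Eventually.of_forall fun r => ?_
      have hc : Continuous fun t : ℝ => (min 1 (t * r)) ^ α * g r :=
        ((continuous_const.min (continuous_id.mul continuous_const)).rpow_const
          fun _ => Or.inr hα.le).mul continuous_const
      have := hc.tendsto 0
      simp only [zero_mul, min_eq_right zero_le_one, zero_rpow hα.ne'] at this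
      exact this.mono_left nhdsWithin_le_nhds
  simpa using h

/-- The tail kernel `1_{s > 1}` is at most `min(1,s)^α`. -/
lemma tail_le_truncMoment (hα : 0 < α) (hg0 : ∀ r, 0 < r → 0 ≤ g r)
    (hgi : IntegrableOn g (Set.Ioi 0)) {ε ρ : ℝ} (hε : 0 < ε) (hρ : 0 < ρ) :
    ∫ r in Set.Ioi (ρ / ε), g r ≤ truncMoment g α (ε / ρ) := by
  have ht : 0 ≤ ε / ρ := by positivity
  have hsub : Set.Ioi (ρ / ε) ⊆ Set.Ioi 0 := Set.Ioi_subset_Ioi (by positivity)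
  have heq : ∫ r in Set.Ioi (ρ / ε), g r
      = ∫ r in Set.Ioi (ρ / ε), (min 1 (ε / ρ * r)) ^ α * g r := by
    refine setIntegral_congr_fun measurableSet_Ioi fun r hr => ?_
    have h1 : 1 ≤ ε / ρ * r := by
      have h2 : ρ < r * ε := (div_lt_iff₀ hε).1 hr
      rw [div_mul_eq_mul_div, le_div_iff₀ hρ]
      linarith
    simp [min_eq_left h1]
  rw [heq]
  refine setIntegral_mono_set (integrableOn_trunc hα hg0 hgi ht) ?_ hsub.eventuallyLE
  filter_upwards [ae_restrict_mem measurableSet_Ioi] with r hr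
  exact mul_nonneg (rpow_nonneg (trunc_nonneg ht hr) _) (hg0 r hr)

/-- The kernel `s^α 1_{s ≤ 1}` is at most `min(1,s)^α`. -/
lemma head_le_truncMoment (hα : 0 < α) (hg0 : ∀ r, 0 < r → 0 ≤ g r)
    (hgi : IntegrableOn g (Set.Ioi 0)) {ε ρ : ℝ} (hε : 0 < ε) (hρ : 0 < ρ) :
    ∫ r in Set.Ioc 0 (ρ / ε), (ε * r / ρ) ^ α * g r ≤ truncMoment g α (ε / ρ) := by
  have ht : 0 ≤ ε / ρ := by positivity
  have heq : ∫ r in Set.Ioc 0 (ρ / ε), (ε * r / ρ) ^ α * g r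
      = ∫ r in Set.Ioc 0 (ρ / ε), (min 1 (ε / ρ * r)) ^ α * g r := by
    refine setIntegral_congr_fun measurableSet_Ioc fun r hr => ?_
    have h1 : ε / ρ * r ≤ 1 := by
      have h2 : r * ε ≤ ρ := (le_div_iff₀ hε).1 hr.2
      rw [div_mul_eq_mul_div, div_le_iff₀ hρ]
      linarith
    rw [div_mul_eq_mul_div] at h1
    simp only [div_mul_eq_mul_div, min_eq_right h1]
  rw [heq]
  refine setIntegral_mono_set (integrableOn_trunc hα hg0 hgi ht) ?_
    Set.Ioc_subset_Ioi_self.eventuallyLE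
  filter_upwards [ae_restrict_mem measurableSet_Ioi] with r hr
  exact mul_nonneg (rpow_nonneg (trunc_nonneg ht hr) _) (hg0 r hr)

/-- Bound uniform in `ρ`: for `ρ ≤ √ε` the factor `√ρ` is small, and for `ρ ≥ √ε` the moment
`I(ε/ρ)` is at most `I(√ε)`. -/
lemma weighted_truncMoment_le (hα : 0 < α) (hg0 : ∀ r, 0 < r → 0 ≤ g r)
    (hgi : IntegrableOn g (Set.Ioi 0)) {ε ρ : ℝ} (hε : 0 < ε) (hρ : 0 < ρ) :
    min (√ρ) 1 * truncMoment g α (ε / ρ)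
      ≤ √(√ε) * (∫ r in Set.Ioi (0 : ℝ), g r) + truncMoment g α (√ε) := by
  have ht : 0 ≤ ε / ρ := by positivity
  have hM : 0 ≤ ∫ r in Set.Ioi (0 : ℝ), g r := setIntegral_nonneg measurableSet_Ioi hg0
  have hI := truncMoment_nonneg (α := α) hg0 ht
  have hI' := truncMoment_nonneg (α := α) hg0 (sqrt_nonneg ε)
  rcases le_total ρ (√ε) with h | h
  · have : min (√ρ) 1 * truncMoment g α (ε / ρ) ≤ √(√ε) * ∫ r in Set.Ioi (0 : ℝ), g r :=
      mul_le_mul ((min_le_left _ _).trans (sqrt_le_sqrt h)) (truncMoment_le hα hg0 hgi ht) hI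
        (sqrt_nonneg _)
    linarith
  · have h1 : ε / ρ ≤ √ε := by
      rw [div_le_iff₀ hρ]
      calc ε = √ε * √ε := (mul_self_sqrt hε.le).symm
        _ ≤ √ε * ρ := mul_le_mul_of_nonneg_left h (sqrt_nonneg _)
    have h2 := truncMoment_mono hα hg0 hgi ht h1
    have h3 : min (√ρ) 1 * truncMoment g α (ε / ρ) ≤ truncMoment g α (ε / ρ) :=
      mul_le_of_le_one_left hI (min_le_right _ _)
    have h4 : 0 ≤ √(√ε) * ∫ r in Set.Ioi (0 : ℝ), g r := mul_nonneg (sqrt_nonneg _) hM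
    linarith

lemma weighted_truncMoment_le_total (hα : 0 < α) (hg0 : ∀ r, 0 < r → 0 ≤ g r)
    (hgi : IntegrableOn g (Set.Ioi 0)) {ε ρ : ℝ} (hε : 0 < ε) (hρ : 0 < ρ) :
    min (√ρ) 1 * truncMoment g α (ε / ρ) ≤ ∫ r in Set.Ioi (0 : ℝ), g r := by
  have ht : 0 ≤ ε / ρ := by positivity
  exact (mul_le_of_le_one_left (truncMoment_nonneg hg0 ht) (min_le_right _ _)).trans
    (truncMoment_le hα hg0 hgi ht)

lemma tendsto_uniform_bound (hα : 0 < α) (hg0 : ∀ r, 0 < r → 0 ≤ g r)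
    (hgi : IntegrableOn g (Set.Ioi 0)) :
    Tendsto (fun ε => √(√ε) * (∫ r in Set.Ioi (0 : ℝ), g r) + truncMoment g α (√ε))
      (𝓝[>] 0) (𝓝 0) := by
  have h1 : Tendsto (fun ε => √(√ε) * (∫ r in Set.Ioi (0 : ℝ), g r)) (𝓝[>] 0) (𝓝 0) := by
    have hc : Continuous fun ε => √(√ε) * (∫ r in Set.Ioi (0 : ℝ), g r) := by fun_prop
    have := hc.tendsto 0
    simp only [sqrt_zero, zero_mul] at this
    exact this.mono_left nhdsWithin_le_nhds
  have h2 : Tendsto (fun ε : ℝ => √ε) (𝓝[>] 0) (𝓝[>] 0) := by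
    refine tendsto_nhdsWithin_iff.2 ⟨?_, ?_⟩
    · have := continuous_sqrt.tendsto 0
      rw [sqrt_zero] at this
      exact this.mono_left nhdsWithin_le_nhds
    · filter_upwards [self_mem_nhdsWithin] with ε hε
      exact sqrt_pos.2 hε
  simpa using h1.add ((tendsto_truncMoment hα hg0 hgi).comp h2)

end

/-- If `φ̂` is Borel measurable with `∫₀^∞ r³ φ̂(r)² dr = 1/(2π)` and `α > 0`,
then `0 ≤ A*_φ̂(ε) ≤ 1/(2π)` and `0 ≤ A*_{φ̂,α}(ε) ≤ 1/(2π)` for all `ε > 0`, and both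
`A*_φ̂(ε) → 0` and `A*_{φ̂,α}(ε) → 0` as `ε → 0⁺`. -/
theorem stmt2 (φh : ℝ → ℝ) (hmeas : Measurable φh)
    (hnorm : ∫ r in Set.Ioi (0 : ℝ), r ^ 3 * (φh r) ^ 2 = 1 / (2 * π))
    (α : ℝ) (hα : 0 < α) :
    (∀ ε : ℝ, 0 < ε → 0 ≤ Astar φh ε ∧ Astar φh ε ≤ 1 / (2 * π)) ∧
    (∀ ε : ℝ, 0 < ε → 0 ≤ AstarAlpha φh α ε ∧ AstarAlpha φh α ε ≤ 1 / (2 * π)) ∧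
    Tendsto (Astar φh) (𝓝[>] 0) (𝓝 0) ∧
    Tendsto (AstarAlpha φh α) (𝓝[>] 0) (𝓝 0) := by
  have hg0 : ∀ r : ℝ, 0 < r → 0 ≤ r ^ 3 * (φh r) ^ 2 := fun r hr => by positivity
  -- A non-integrable function would have Bochner integral `0 ≠ 1/(2π)`.
  have hgi : IntegrableOn (fun r => r ^ 3 * (φh r) ^ 2) (Set.Ioi 0) := by
    by_contra h
    rw [integral_undef h] at hnorm
    have : 0 < 1 / (2 * π) := by positivity
    linarith
  have hmin : ∀ ρ : ℝ, 0 ≤ min (√ρ) 1 := fun ρ => le_min (sqrt_nonneg _) zero_le_one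
  have hA0 : ∀ ε : ℝ, 0 < ε → 0 ≤ Astar φh ε := fun ε hε =>
    Real.iSup_nonneg fun ρ => mul_nonneg (hmin _) <|
      setIntegral_nonneg measurableSet_Ioi fun r hr =>
        hg0 r (lt_of_le_of_lt (div_nonneg ρ.2 hε.le) hr)
  have hB0 : ∀ ε : ℝ, 0 < ε → 0 ≤ AstarAlpha φh α ε := fun ε hε =>
    Real.iSup_nonneg fun ρ => mul_nonneg (hmin _) <|
      setIntegral_nonneg measurableSet_Ioc fun r hr =>
        mul_nonneg (rpow_nonneg (div_nonneg (mul_nonneg hε.le hr.1.le) ρ.2.le) _) (hg0 r hr.1)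
  -- Any bound on the weighted moments, uniform in `ρ`, bounds both suprema.
  have hA : ∀ ε : ℝ, 0 < ε → ∀ C : ℝ, 0 ≤ C → (∀ ρ : ℝ, 0 < ρ →
      min (√ρ) 1 * truncMoment (fun r => r ^ 3 * (φh r) ^ 2) α (ε / ρ) ≤ C) →
      Astar φh ε ≤ C := by
    intro ε hε C hC h
    refine Real.iSup_le (fun ρ => ?_) hC
    rcases ρ.2.eq_or_lt with h0 | h0
    · simpa [← h0] using hC
    · exact (mul_le_mul_of_nonneg_left (tail_le_truncMoment hα hg0 hgi hε h0) (hmin _)).trans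
        (h _ h0)
  have hB : ∀ ε : ℝ, 0 < ε → ∀ C : ℝ, 0 ≤ C → (∀ ρ : ℝ, 0 < ρ →
      min (√ρ) 1 * truncMoment (fun r => r ^ 3 * (φh r) ^ 2) α (ε / ρ) ≤ C) →
      AstarAlpha φh α ε ≤ C := by
    intro ε hε C hC h
    refine Real.iSup_le (fun ρ => ?_) hC
    exact (mul_le_mul_of_nonneg_left (head_le_truncMoment hα hg0 hgi hε ρ.2) (hmin _)).trans
      (h _ ρ.2)
  have hM : (0 : ℝ) ≤ 1 / (2 * π) := by positivity
  have hC : ∀ ε : ℝ, 0 ≤ √(√ε) * (∫ r in Set.Ioi (0 : ℝ), r ^ 3 * (φh r) ^ 2)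
      + truncMoment (fun r => r ^ 3 * (φh r) ^ 2) α (√ε) := fun ε =>
    add_nonneg (mul_nonneg (sqrt_nonneg _) (hnorm ▸ hM)) (truncMoment_nonneg hg0 (sqrt_nonneg _))
  refine ⟨fun ε hε => ⟨hA0 ε hε, hA ε hε _ hM fun ρ hρ => ?_⟩,
    fun ε hε => ⟨hB0 ε hε, hB ε hε _ hM fun ρ hρ => ?_⟩, ?_, ?_⟩
  · exact hnorm ▸ weighted_truncMoment_le_total hα hg0 hgi hε hρ
  · exact hnorm ▸ weighted_truncMoment_le_total hα hg0 hgi hε hρ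
  · refine tendsto_of_tendsto_of_tendsto_of_le_of_le' tendsto_const_nhds
      (tendsto_uniform_bound hα hg0 hgi) ?_ ?_
    · filter_upwards [self_mem_nhdsWithin] with ε hε using hA0 ε hε
    · filter_upwards [self_mem_nhdsWithin] with ε hε
      exact hA ε hε _ (hC ε) fun ρ hρ => weighted_truncMoment_le hα hg0 hgi hε hρ
  · refine tendsto_of_tendsto_of_tendsto_of_le_of_le' tendsto_const_nhds
      (tendsto_uniform_bound hα hg0 hgi) ?_ ?_
    · filter_upwards [self_mem_nhdsWithin] with ε hε using hB0 ε hε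
    · filter_upwards [self_mem_nhdsWithin] with ε hε
      exact hB ε hε _ (hC ε) fun ρ hρ => weighted_truncMoment_le hα hg0 hgi hε hρ

end
end

section
/- Let φ̂ : [0,∞) → ℝ be Borel measurable with ∫₀^∞ r³ φ̂(r)² dr = 1/(2π), and let α > 0. Then for every ε > 0 and every ρ > 0: (i) 0 ≤ 1/(2πρ³) − ∫₀^{π/2} (ρ cos³θ sin θ / ε⁴) · φ̂(ρ cos θ / ε)² dθ ≤ A*_φ̂(ε) / (ρ³ · min(ρ^{1/2}, 1)); and (ii) ∫₀^{π/2} (ρ cos^{3+α}θ sin θ / ε⁴) · φ̂(ρ cos θ / ε)² dθ ≤ A*_{φ̂,α}(ε) / (ρ³ · min(ρ^{1/2}, 1)). -/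
/-!
The substitution `r = ρ cos θ / ε` maps `(0, π/2)` onto `(0, ρ/ε)` with `|dr| = (ρ sin θ / ε) dθ`
(`integral_comp_cos`). It turns the angular integral in (i) into
`ρ⁻³ ∫₀^{ρ/ε} r³ φ̂(r)² dr`, and the one in (ii) into `ρ⁻³ ∫₀^{ρ/ε} (εr/ρ)^α r³ φ̂(r)² dr`.
By the normalization of `φ̂`, the difference in (i) is then `ρ⁻³ ∫_{ρ/ε}^∞ r³ φ̂(r)² dr`, and the upper
bounds say that the value at `ρ` is at most the supremum defining `Astar`, resp. `AstarAlpha`.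
The families are bounded above by `∫₀^∞ r³ φ̂(r)² dr` since their weights are at most `1`, so the
real-valued suprema are genuine; integrability comes from the normalization integral being nonzero.
-/

open MeasureTheory Real Filter
open scoped Topology

noncomputable section

/-- Substitution `r = ρ cos θ / ε`. No integrability of `g` is needed: one integrand
is integrable exactly when the other is, and otherwise both integrals are `0`. -/
lemma integral_comp_cos (g : ℝ → ℝ) {ε ρ : ℝ} (hε : 0 < ε) (hρ : 0 < ρ) :
    ∫ θ in Set.Ioo (0 : ℝ) (π / 2), (ρ * Real.sin θ / ε) * g (ρ * Real.cos θ / ε) =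
      ∫ r in Set.Ioc (0 : ℝ) (ρ / ε), g r := by
  have himg : (fun θ : ℝ => ρ * Real.cos θ / ε) '' Set.Ioo (0 : ℝ) (π / 2) =
      Set.Ioo (0 : ℝ) (ρ / ε) := by
    ext r
    constructor
    · rintro ⟨θ, ⟨h0, h1⟩, rfl⟩
      have hc : 0 < Real.cos θ := Real.cos_pos_of_mem_Ioo ⟨by linarith, h1⟩
      have hc1 : Real.cos θ < 1 := by
        have := Real.cos_lt_cos_of_nonneg_of_le_pi_div_two le_rfl h1.le h0
        simpa using this
      refine ⟨by positivity, ?_⟩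
      have : ρ * Real.cos θ < ρ := by nlinarith
      exact div_lt_div_of_pos_right this hε
    · rintro ⟨h0, h1⟩
      have h2 : r * ε < ρ := (lt_div_iff₀ hε).1 h1
      have h3 : 0 < r * ε / ρ := by positivity
      have h4 : r * ε / ρ < 1 := (div_lt_one hρ).2 h2
      refine ⟨Real.arccos (r * ε / ρ), ⟨Real.arccos_pos.2 h4, Real.arccos_lt_pi_div_two.2 h3⟩, ?_⟩
      simp only
      rw [Real.cos_arccos (by linarith) h4.le]
      field_simp
  have hinj : Set.InjOn (fun θ : ℝ => ρ * Real.cos θ / ε) (Set.Ioo (0 : ℝ) (π / 2)) := by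
    intro x hx y hy hxy
    have hxy' : Real.cos x = Real.cos y := by
      simp only at hxy
      field_simp at hxy
      exact hxy
    exact Real.injOn_cos ⟨hx.1.le, by linarith [hx.2, Real.pi_pos]⟩
      ⟨hy.1.le, by linarith [hy.2, Real.pi_pos]⟩ hxy'
  have hderiv : ∀ x ∈ Set.Ioo (0 : ℝ) (π / 2),
      HasDerivWithinAt (fun θ : ℝ => ρ * Real.cos θ / ε) (ρ * (-Real.sin x) / ε)
        (Set.Ioo (0 : ℝ) (π / 2)) x := fun x _ =>
    (((Real.hasDerivAt_cos x).const_mul ρ).div_const ε).hasDerivWithinAt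
  rw [integral_Ioc_eq_integral_Ioo, ← himg,
    integral_image_eq_integral_abs_deriv_smul measurableSet_Ioo hderiv hinj]
  refine setIntegral_congr_fun measurableSet_Ioo fun x hx => ?_
  have hs : 0 < Real.sin x := Real.sin_pos_of_pos_of_lt_pi hx.1 (by linarith [hx.2, Real.pi_pos])
  have habs : |ρ * (-Real.sin x) / ε| = ρ * Real.sin x / ε := by
    rw [mul_neg, neg_div, abs_neg, abs_of_pos (by positivity)]
  simp only [smul_eq_mul]
  rw [habs]

/-- If `φ̂` is Borel measurable with `∫₀^∞ r³ φ̂(r)² dr = 1/(2π)` and `α > 0`,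
then for all `ε > 0` and `ρ > 0`:
(i) `0 ≤ 1/(2πρ³) − ∫₀^{π/2} (ρ cos³θ sinθ/ε⁴) φ̂(ρcosθ/ε)² dθ ≤ A*_φ̂(ε)/(ρ³ min(√ρ,1))`;
(ii) `∫₀^{π/2} (ρ cos^{3+α}θ sinθ/ε⁴) φ̂(ρcosθ/ε)² dθ ≤ A*_{φ̂,α}(ε)/(ρ³ min(√ρ,1))`. -/
theorem stmt3 (φh : ℝ → ℝ) (hmeas : Measurable φh)
    (hnorm : ∫ r in Set.Ioi (0 : ℝ), r ^ 3 * (φh r) ^ 2 = 1 / (2 * π))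
    (α : ℝ) (hα : 0 < α) (ε : ℝ) (hε : 0 < ε) (ρ : ℝ) (hρ : 0 < ρ) :
    (0 ≤ 1 / (2 * π * ρ ^ 3) -
        ∫ θ in (0 : ℝ)..(π / 2),
          (ρ * Real.cos θ ^ 3 * Real.sin θ / ε ^ 4) * (φh (ρ * Real.cos θ / ε)) ^ 2) ∧
    (1 / (2 * π * ρ ^ 3) -
        (∫ θ in (0 : ℝ)..(π / 2),
          (ρ * Real.cos θ ^ 3 * Real.sin θ / ε ^ 4) * (φh (ρ * Real.cos θ / ε)) ^ 2) ≤
      Astar φh ε / (ρ ^ 3 * min (Real.sqrt ρ) 1)) ∧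
    ((∫ θ in (0 : ℝ)..(π / 2),
          (ρ * Real.cos θ ^ ((3 : ℝ) + α) * Real.sin θ / ε ^ 4) *
            (φh (ρ * Real.cos θ / ε)) ^ 2) ≤
      AstarAlpha φh α ε / (ρ ^ 3 * min (Real.sqrt ρ) 1)) := by
  have hint : IntegrableOn (fun r : ℝ => r ^ 3 * (φh r) ^ 2) (Set.Ioi 0) := by
    by_contra h
    rw [integral_undef h] at hnorm
    have : 0 < 1 / (2 * π) := by positivity
    linarith
  have hnn : ∀ r ∈ Set.Ioi (0 : ℝ), 0 ≤ r ^ 3 * (φh r) ^ 2 := fun r hr => by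
    have : (0 : ℝ) < r := hr
    positivity
  have hm : 0 < min (Real.sqrt ρ) 1 := lt_min (Real.sqrt_pos.2 hρ) one_pos
  have hρε : 0 < ρ / ε := by positivity
  have htail : ∀ a : ℝ, 0 ≤ a → 0 ≤ (∫ r in Set.Ioi a, r ^ 3 * (φh r) ^ 2) ∧
      (∫ r in Set.Ioi a, r ^ 3 * (φh r) ^ 2) ≤ 1 / (2 * π) := by
    intro a ha
    have hsub : Set.Ioi a ⊆ Set.Ioi 0 := Set.Ioi_subset_Ioi ha
    refine ⟨setIntegral_nonneg measurableSet_Ioi fun r hr => hnn r (hsub hr), ?_⟩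
    rw [← hnorm]
    exact setIntegral_mono_set hint
      ((ae_restrict_iff' measurableSet_Ioi).2 (Eventually.of_forall hnn)) hsub.eventuallyLE
  have hsplit : 1 / (2 * π) = (∫ r in Set.Ioc 0 (ρ / ε), r ^ 3 * (φh r) ^ 2) +
      ∫ r in Set.Ioi (ρ / ε), r ^ 3 * (φh r) ^ 2 := by
    rw [← hnorm, ← Set.Ioc_union_Ioi_eq_Ioi hρε.le]
    exact setIntegral_union (Set.Ioc_disjoint_Ioi le_rfl) measurableSet_Ioi
      (hint.mono_set Set.Ioc_subset_Ioi_self) (hint.mono_set (Set.Ioi_subset_Ioi hρε.le))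
  have hI1 : (∫ θ in (0 : ℝ)..(π / 2),
      (ρ * Real.cos θ ^ 3 * Real.sin θ / ε ^ 4) * (φh (ρ * Real.cos θ / ε)) ^ 2) =
      (∫ r in Set.Ioc 0 (ρ / ε), r ^ 3 * (φh r) ^ 2) / ρ ^ 3 := by
    rw [intervalIntegral.integral_of_le (by positivity), integral_Ioc_eq_integral_Ioo,
      ← integral_comp_cos _ hε hρ, ← integral_div]
    refine setIntegral_congr_fun measurableSet_Ioo fun x _ => ?_
    field_simp
  have hI2 : (∫ θ in (0 : ℝ)..(π / 2),
      (ρ * Real.cos θ ^ ((3 : ℝ) + α) * Real.sin θ / ε ^ 4) * (φh (ρ * Real.cos θ / ε)) ^ 2) =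
      (∫ r in Set.Ioc 0 (ρ / ε), (ε * r / ρ) ^ α * (r ^ 3 * (φh r) ^ 2)) / ρ ^ 3 := by
    rw [intervalIntegral.integral_of_le (by positivity), integral_Ioc_eq_integral_Ioo,
      ← integral_comp_cos _ hε hρ, ← integral_div]
    refine setIntegral_congr_fun measurableSet_Ioo fun x hx => ?_
    have hc : 0 < Real.cos x := Real.cos_pos_of_mem_Ioo ⟨by linarith [hx.1, Real.pi_pos], hx.2⟩
    have h1 : ε * (ρ * Real.cos x / ε) / ρ = Real.cos x := by field_simp
    have h2 : Real.cos x ^ ((3 : ℝ) + α) = Real.cos x ^ 3 * Real.cos x ^ α := by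
      rw [Real.rpow_add hc]
      norm_cast
    rw [h1, h2]
    field_simp
  have hA1 : min (Real.sqrt ρ) 1 * (∫ r in Set.Ioi (ρ / ε), r ^ 3 * (φh r) ^ 2) ≤ Astar φh ε := by
    refine le_ciSup (f := fun ρ : {x : ℝ // 0 ≤ x} =>
      min (Real.sqrt ρ) 1 * ∫ r in Set.Ioi ((ρ : ℝ) / ε), r ^ 3 * (φh r) ^ 2) ?_ ⟨ρ, hρ.le⟩
    refine ⟨1 / (2 * π), ?_⟩
    rintro _ ⟨⟨σ, hσ⟩, rfl⟩
    obtain ⟨h0, h1⟩ := htail (σ / ε) (by positivity)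
    exact (mul_le_of_le_one_left h0 (min_le_right _ _)).trans h1
  have hA2 : min (Real.sqrt ρ) 1 *
      (∫ r in Set.Ioc 0 (ρ / ε), (ε * r / ρ) ^ α * (r ^ 3 * (φh r) ^ 2)) ≤ AstarAlpha φh α ε := by
    refine le_ciSup (f := fun ρ : {x : ℝ // 0 < x} =>
      min (Real.sqrt ρ) 1 * ∫ r in Set.Ioc (0 : ℝ) ((ρ : ℝ) / ε),
        (ε * r / (ρ : ℝ)) ^ α * (r ^ 3 * (φh r) ^ 2)) ?_ ⟨ρ, hρ⟩
    refine ⟨1 / (2 * π), ?_⟩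
    rintro _ ⟨⟨σ, hσ⟩, rfl⟩
    have hpt0 : ∀ r ∈ Set.Ioc 0 (σ / ε), 0 ≤ (ε * r / σ) ^ α * (r ^ 3 * (φh r) ^ 2) :=
      fun r hr => by
        have : 0 < r := hr.1
        positivity
    have hpt1 : ∀ r ∈ Set.Ioc 0 (σ / ε),
        (ε * r / σ) ^ α * (r ^ 3 * (φh r) ^ 2) ≤ r ^ 3 * (φh r) ^ 2 := fun r hr => by
      have h0 : 0 < r := hr.1
      have h1 : r * ε ≤ σ := (le_div_iff₀ hε).1 hr.2
      refine mul_le_of_le_one_left (hnn r h0) (Real.rpow_le_one (by positivity) ?_ hα.le)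
      rw [div_le_one hσ]
      linarith
    have hiS : IntegrableOn (fun r : ℝ => r ^ 3 * (φh r) ^ 2) (Set.Ioc 0 (σ / ε)) :=
      hint.mono_set Set.Ioc_subset_Ioi_self
    have hmono : (∫ r in Set.Ioc 0 (σ / ε), (ε * r / σ) ^ α * (r ^ 3 * (φh r) ^ 2)) ≤
        1 / (2 * π) := by
      rw [← hnorm]
      refine (integral_mono_of_nonneg ?_ hiS ?_).trans (setIntegral_mono_set hint
        ((ae_restrict_iff' measurableSet_Ioi).2 (Eventually.of_forall hnn))
        Set.Ioc_subset_Ioi_self.eventuallyLE)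
      · exact (ae_restrict_iff' measurableSet_Ioc).2 (Eventually.of_forall hpt0)
      · exact (ae_restrict_iff' measurableSet_Ioc).2 (Eventually.of_forall hpt1)
    exact (mul_le_of_le_one_left (setIntegral_nonneg measurableSet_Ioc hpt0)
      (min_le_right _ _)).trans hmono
  have hdiff : 1 / (2 * π * ρ ^ 3) - (∫ r in Set.Ioc 0 (ρ / ε), r ^ 3 * (φh r) ^ 2) / ρ ^ 3 =
      (∫ r in Set.Ioi (ρ / ε), r ^ 3 * (φh r) ^ 2) / ρ ^ 3 := by
    rw [← div_div, hsplit]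
    ring
  -- Both upper bounds reduce to `min (√ρ) 1 * X ≤ A`, the bound of one term by the supremum.
  have hfin : ∀ X A : ℝ, min (Real.sqrt ρ) 1 * X ≤ A →
      X / ρ ^ 3 ≤ A / (ρ ^ 3 * min (Real.sqrt ρ) 1) := by
    intro X A h
    rw [div_le_div_iff₀ (by positivity) (by positivity)]
    nlinarith [mul_le_mul_of_nonneg_right h (pow_pos hρ 3).le]
  rw [hI1, hI2, hdiff]
  exact ⟨div_nonneg (htail _ hρε.le).1 (by positivity), hfin _ _ hA1, hfin _ _ hA2⟩

end
end

section
/- Let k, d₁, …, d_k ∈ ℕ, and for each j let X_j ⊂ ℝ^{d_j} be a Borel set and μ_j ≥ 0 a regular Borel measure on X_j. Let f^n_j, f_j ∈ L¹(X_j, dμ_j) satisfy f^n_j ⇀ f_j weakly in L¹(X_j, dμ_j) as n → ∞, for j = 1, …, k. Let X = X₁ × ⋯ × X_k with product measure μ = μ₁ ⊗ ⋯ ⊗ μ_k, and let Ψ_n, Ψ be Borel measurable functions on X with sup_{n≥1, x∈X} |Ψ_n(x)| < ∞ and Ψ_n(x) → Ψ(x) for μ-a.e. x = (x₁, …, x_k)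 ∈ X. Then lim_{n→∞} ∫_X Ψ_n(x) f^n_1(x₁) ⋯ f^n_k(x_k) dμ(x) = ∫_X Ψ(x) f_1(x₁) ⋯ f_k(x_k) dμ(x). -/
/-!
A weakly convergent sequence `f n ⇀ g` in `L¹` pairs well with bounded, a.e. convergent multipliers:
if `h n → h₀` a.e. and boundedly, then `∫ h n * f n → ∫ h₀ * g` (`tendsto_pairing`). This single-factor
statement is a form of the Vitali–Hahn–Saks theorem, obtained here by Baire category. The functions
bounded by `1` form a complete metric space `K` for the `L¹(ν)` distance, `ν` a finite measure
equivalent to `μ`, and the functionals `φ ↦ ∫ φ * f n` are continuous and pointwise Cauchy on `K`.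
Hence they are uniformly `ε`-Cauchy near some `φ₀ ∈ K` (`exists_uniform_cauchy`). If `|h n| ≤ 1` and
`h n → 0` a.e., then `h n` is the difference of `φ₀ * (1 - |h n|) + h n` and `φ₀ * (1 - |h n|)`, which
both lie in `K` and tend to `φ₀`; so `∫ h n * f n` is within `2ε` of `∫ h n * f N`, which tends to `0`
by dominated convergence (`tendsto_pairing_zero`). The same fact shows that `‖f n‖₁` is bounded
(`exists_norm_bound`).

The product statement follows by induction on the number of factors (`tendsto_integral_pi`). By Fubini,
the first coordinate can be integrated out; the new multipliers `z ↦ ∫ Ψn (y, z) * f n 0 y dy` are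
bounded because `‖f n 0‖₁` is, and converge for a.e. `z` by the single-factor statement.
-/

open MeasureTheory Filter
open scoped Topology

namespace WeakL1

variable {α : Type*} [MeasurableSpace α]

/-! ### The unit box as a complete metric space and Baire category -/

/-- The functions bounded by `1` almost everywhere, as an order interval of `L¹(ν)`; it is closed,
hence a complete metric space for the `L¹(ν)` distance. -/
abbrev UnitBox (ν : Measure α) [IsFiniteMeasure ν] : Type _ :=
  Set.Icc (-(Lp.const 1 ν (1 : ℝ))) (Lp.const 1 ν (1 : ℝ))

lemma mem_box_iff {ν : Measure α} [IsFiniteMeasure ν] (φ : Lp ℝ 1 ν) :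
    φ ∈ Set.Icc (-(Lp.const 1 ν (1 : ℝ))) (Lp.const 1 ν (1 : ℝ)) ↔ ∀ᵐ x ∂ν, |φ x| ≤ 1 := by
  have h1 := Lp.coeFn_const (p := 1) (μ := ν) (c := (1 : ℝ))
  have h2 := Lp.coeFn_neg (Lp.const 1 ν (1 : ℝ))
  rw [Set.mem_Icc, ← Lp.coeFn_le, ← Lp.coeFn_le]
  constructor
  · rintro ⟨ha, hb⟩
    filter_upwards [h1, h2, ha, hb] with x h1 h2 ha hb
    rw [h2, Pi.neg_apply, h1] at ha
    rw [h1] at hb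
    exact abs_le.2 ⟨ha, hb⟩
  · intro h
    constructor
    · filter_upwards [h1, h2, h] with x h1 h2 h
      rw [h2, Pi.neg_apply, h1]
      exact (abs_le.1 h).1
    · filter_upwards [h1, h] with x h1 h
      rw [h1]
      exact (abs_le.1 h).2

/-- Dominated convergence against a fixed integrable function. -/
lemma tendsto_integral_mul {μ : Measure α} {f : α → ℝ} (hf : Integrable f μ)
    {C : ℝ} {φ : ℕ → α → ℝ} {φ₀ : α → ℝ}
    (hm : ∀ n, AEStronglyMeasurable (φ n) μ) (hb : ∀ n, ∀ᵐ x ∂μ, |φ n x| ≤ C)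
    (hlim : ∀ᵐ x ∂μ, Tendsto (fun n => φ n x) atTop (𝓝 (φ₀ x))) :
    Tendsto (fun n => ∫ x, φ n x * f x ∂μ) atTop (𝓝 (∫ x, φ₀ x * f x ∂μ)) := by
  refine tendsto_integral_of_dominated_convergence (fun x => C * |f x|)
    (fun n => (hm n).mul hf.1) (hf.abs.const_mul C) (fun n => ?_) ?_
  · filter_upwards [hb n] with x hx
    rw [Real.norm_eq_abs, abs_mul]
    gcongr
  · filter_upwards [hlim] with x hx using hx.mul_const _

/-- Integration against `f ∈ L¹(μ)` is continuous on the unit box for the `L¹(ν)` distance, since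
`L¹(ν)` convergence gives a.e. convergence along subsequences. -/
lemma continuous_box {μ ν : Measure α} [IsFiniteMeasure ν] (hμν : μ ≪ ν) {f : α → ℝ}
    (hf : Integrable f μ) :
    Continuous (fun φ : UnitBox ν => ∫ x, (φ : Lp ℝ 1 ν) x * f x ∂μ) := by
  rw [continuous_iff_seqContinuous]
  intro u φ hu
  refine tendsto_of_subseq_tendsto fun ns hns => ?_
  have h1 : Tendsto (fun i => (u (ns i) : Lp ℝ 1 ν)) atTop (𝓝 (φ : Lp ℝ 1 ν)) :=
    (continuous_subtype_val.tendsto φ).comp (hu.comp hns)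
  obtain ⟨ms, -, hms⟩ := (tendstoInMeasure_of_tendsto_Lp h1).exists_seq_tendsto_ae
  refine ⟨ms, tendsto_integral_mul (C := 1) hf (fun n => ?_) (fun n => ?_) (hμν.ae_le hms)⟩
  · exact (Lp.stronglyMeasurable _).aestronglyMeasurable
  · exact hμν.ae_le ((mem_box_iff _).1 (u (ns (ms n))).2)

/-- Baire category: near some `φ₀` in the unit box, the pairings with `f n` are uniformly
`ε`-Cauchy from some rank on. -/
lemma exists_uniform_cauchy {μ : Measure α} [SigmaFinite μ] {f : ℕ → α → ℝ} {g : α → ℝ}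
    (hf : ∀ n, Integrable (f n) μ)
    (hw : ∀ φ : α → ℝ, Measurable φ → (∃ C : ℝ, ∀ x, |φ x| ≤ C) →
      Tendsto (fun n => ∫ x, φ x * f n x ∂μ) atTop (𝓝 (∫ x, φ x * g x ∂μ)))
    {ε : ℝ} (hε : 0 < ε) :
    ∃ (N : ℕ) (φ₀ : α → ℝ), Measurable φ₀ ∧ (∀ x, |φ₀ x| ≤ 1) ∧
      ∀ ψ : ℕ → α → ℝ, (∀ m, Measurable (ψ m)) → (∀ m x, |ψ m x| ≤ 1) →
        (∀ᵐ x ∂μ, Tendsto (fun m => ψ m x) atTop (𝓝 (φ₀ x))) →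
        ∀ᶠ m in atTop, ∀ n ≥ N, |∫ x, ψ m x * f n x ∂μ - ∫ x, ψ m x * f N x ∂μ| ≤ ε := by
  set ν := μ.toFinite with hν
  have hμν : μ ≪ ν := absolutelyContinuous_toFinite μ
  have hνμ : ν ≪ μ := toFinite_absolutelyContinuous μ
  let L : ℕ → UnitBox ν → ℝ := fun n φ => ∫ x, (φ : Lp ℝ 1 ν) x * f n x ∂μ
  have hL : ∀ n, Continuous (L n) := fun n => continuous_box hμν (hf n)
  -- truncation turns an a.e. bounded function into an everywhere bounded one, as `hw` requires
  let clip : (α → ℝ) → α → ℝ := fun φ x => max (-1) (min 1 (φ x))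
  have hclip_le : ∀ φ x, |clip φ x| ≤ 1 := fun φ x =>
    abs_le.2 ⟨le_max_left _ _, max_le (by norm_num) (min_le_left _ _)⟩
  have hclip_meas : ∀ φ : α → ℝ, Measurable φ → Measurable (clip φ) := fun φ h =>
    measurable_const.max (measurable_const.min h)
  have hclip_ae : ∀ φ : UnitBox ν, ∀ᵐ x ∂ν, clip (φ : Lp ℝ 1 ν) x = (φ : Lp ℝ 1 ν) x := by
    intro φ
    filter_upwards [(mem_box_iff _).1 φ.2] with x hx
    have := abs_le.1 hx
    simp only [clip]
    rw [min_eq_right this.2, max_eq_right this.1]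
  have hmeas : ∀ φ : UnitBox ν, Measurable ((φ : Lp ℝ 1 ν) : α → ℝ) := fun φ =>
    (Lp.stronglyMeasurable _).measurable
  have hconv : ∀ φ : UnitBox ν, CauchySeq (fun n => L n φ) := by
    intro φ
    have := (hw _ (hclip_meas _ (hmeas φ)) ⟨1, hclip_le _⟩).cauchySeq
    convert! this using 2 with n
    refine integral_congr_ae ?_
    filter_upwards [hμν.ae_le (hclip_ae φ)] with x hx
    rw [hx]
  let F : ℕ → Set (UnitBox ν) := fun N => {φ | ∀ n ≥ N, |L n φ - L N φ| ≤ ε}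
  have hFc : ∀ N, IsClosed (F N) := by
    intro N
    simp only [F, Set.ofPred_forall]
    refine isClosed_iInter fun n => isClosed_iInter fun _ => ?_
    exact isClosed_le ((hL n).sub (hL N)).abs continuous_const
  have hFU : ⋃ N, F N = Set.univ := by
    refine Set.eq_univ_of_forall fun φ => Set.mem_iUnion.2 ?_
    obtain ⟨N, hN⟩ := Metric.cauchySeq_iff'.1 (hconv φ) ε hε
    exact ⟨N, fun n hn => (hN n hn).le⟩
  have : CompleteSpace (UnitBox ν) := isClosed_Icc.completeSpace_coe
  have : Nonempty (UnitBox ν) := ⟨0, (mem_box_iff _).2 (by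
    filter_upwards [Lp.coeFn_zero ℝ 1 ν] with x hx
    rw [hx]
    simp)⟩
  obtain ⟨N, φ₀, hφ₀⟩ := nonempty_interior_of_iUnion_of_closed hFc hFU
  refine ⟨N, clip (φ₀ : Lp ℝ 1 ν), hclip_meas _ (hmeas φ₀), hclip_le _, ?_⟩
  intro ψ hψm hψb hψ
  have hLp : ∀ m, MemLp (ψ m) 1 ν := fun m =>
    MemLp.of_bound (hψm m).aestronglyMeasurable 1 (Eventually.of_forall (hψb m))
  let u : ℕ → UnitBox ν := fun m => ⟨(hLp m).toLp (ψ m), (mem_box_iff _).2 (by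
    filter_upwards [(hLp m).coeFn_toLp] with x hx
    rw [hx]
    exact hψb m x)⟩
  have hu : Tendsto u atTop (𝓝 φ₀) := by
    rw [tendsto_subtype_rng]
    rw [Lp.tendsto_Lp_iff_tendsto_eLpNorm']
    have hkey := tendsto_lintegral_norm_of_dominated_convergence (μ := ν) (F := ψ)
      (f := (φ₀ : Lp ℝ 1 ν)) (bound := fun _ => 1)
      (fun m => (hψm m).aestronglyMeasurable) (integrable_const (1 : ℝ)).2
      (fun m => Eventually.of_forall (hψb m)) (by
        filter_upwards [hνμ.ae_le hψ, hclip_ae φ₀] with x hx h2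
        rwa [h2] at hx)
    refine hkey.congr fun m => ?_
    rw [eLpNorm_one_eq_lintegral_enorm]
    refine lintegral_congr_ae ?_
    filter_upwards [(hLp m).coeFn_toLp] with x hx
    rw [ofReal_norm]
    simp [u, hx]
  have hint : ∀ m n, L n (u m) = ∫ x, ψ m x * f n x ∂μ := by
    intro m n
    refine integral_congr_ae ?_
    filter_upwards [hμν.ae_le (hLp m).coeFn_toLp] with x hx
    simp [u, hx]
  filter_upwards [hu.eventually (mem_interior_iff_mem_nhds.1 hφ₀)] with m hm n hn
  rw [← hint, ← hint]
  exact hm n hn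

/-! ### One factor: equi-integrability, boundedness and convergence -/

/-- A weakly convergent sequence in `L¹` is equi-integrable, in the form: its pairing with a bounded
sequence tending to `0` almost everywhere tends to `0`. -/
lemma tendsto_pairing_zero {μ : Measure α} [SigmaFinite μ] {f : ℕ → α → ℝ} {g : α → ℝ}
    (hf : ∀ n, Integrable (f n) μ)
    (hw : ∀ φ : α → ℝ, Measurable φ → (∃ C : ℝ, ∀ x, |φ x| ≤ C) →
      Tendsto (fun n => ∫ x, φ x * f n x ∂μ) atTop (𝓝 (∫ x, φ x * g x ∂μ)))
    {h : ℕ → α → ℝ} (hm : ∀ n, Measurable (h n)) (hb : ∀ n x, |h n x| ≤ 1)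
    (hlim : ∀ᵐ x ∂μ, Tendsto (fun n => h n x) atTop (𝓝 0)) :
    Tendsto (fun n => ∫ x, h n x * f n x ∂μ) atTop (𝓝 0) := by
  rw [Metric.tendsto_atTop']
  intro ε hε
  obtain ⟨N, φ₀, hφm, hφb, H⟩ := exists_uniform_cauchy hf hw (ε := ε / 4) (by positivity)
  -- `h m` is the difference of two elements of the unit box, both tending to `φ₀`
  let ψ₁ : ℕ → α → ℝ := fun m x => φ₀ x * (1 - |h m x|)
  let ψ₂ : ℕ → α → ℝ := fun m x => φ₀ x * (1 - |h m x|) + h m x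
  have hm₁ : ∀ m, Measurable (ψ₁ m) := fun m =>
    hφm.mul (measurable_const.sub (hm m).abs)
  have hb₁ : ∀ m x, |ψ₁ m x| ≤ 1 - |h m x| := fun m x => by
    have h0 : 0 ≤ 1 - |h m x| := sub_nonneg.2 (hb m x)
    simp only [ψ₁]
    rw [abs_mul, abs_of_nonneg h0]
    exact mul_le_of_le_one_left h0 (hφb x)
  have hb₂ : ∀ m x, |ψ₂ m x| ≤ 1 := fun m x => by
    have := abs_add_le (ψ₁ m x) (h m x)
    have := hb₁ m x
    change |ψ₁ m x + h m x| ≤ 1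
    linarith
  have hl₁ : ∀ᵐ x ∂μ, Tendsto (fun m => ψ₁ m x) atTop (𝓝 (φ₀ x)) := by
    filter_upwards [hlim] with x hx
    simpa using (hx.abs.const_sub 1).const_mul (φ₀ x)
  have hl₂ : ∀ᵐ x ∂μ, Tendsto (fun m => ψ₂ m x) atTop (𝓝 (φ₀ x)) := by
    filter_upwards [hl₁, hlim] with x h1 h2
    simpa using h1.add h2
  have e₁ := H ψ₁ hm₁ (fun m x => (hb₁ m x).trans (by simp)) hl₁
  have e₂ := H ψ₂ (fun m => (hm₁ m).add (hm m)) hb₂ hl₂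
  have e₃ : Tendsto (fun m => ∫ x, h m x * f N x ∂μ) atTop (𝓝 0) := by
    simpa using tendsto_integral_mul (φ₀ := fun _ => 0) (C := 1) (hf N)
      (fun n => (hm n).aestronglyMeasurable) (fun n => Eventually.of_forall (hb n)) hlim
  have hsub : ∀ m n, ∫ x, h m x * f n x ∂μ
      = ∫ x, ψ₂ m x * f n x ∂μ - ∫ x, ψ₁ m x * f n x ∂μ := by
    intro m n
    rw [← integral_sub]
    · congr with x
      simp only [ψ₁, ψ₂]
      ring
    · exact (hf n).bdd_mul ((hm₁ m).add (hm m)).aestronglyMeasurable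
        (Eventually.of_forall (hb₂ m))
    · exact (hf n).bdd_mul (c := 1) (hm₁ m).aestronglyMeasurable
        (Eventually.of_forall fun x => (hb₁ m x).trans (by simp))
  obtain ⟨M, hM⟩ := eventually_atTop.1 ((e₁.and e₂).and
    ((Metric.tendsto_nhds.1 e₃ (ε / 4) (by positivity)).and (eventually_ge_atTop N)))
  refine ⟨M, fun n hn => ?_⟩
  obtain ⟨⟨h1, h2⟩, h3, h4⟩ := hM n hn.le
  have h1 := abs_le.1 (h1 n h4)
  have h2 := abs_le.1 (h2 n h4)
  rw [Real.dist_eq, sub_zero, hsub] at h3 ⊢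
  have h3 := abs_lt.1 h3
  rw [abs_lt]
  constructor <;> linarith [h1.1, h1.2, h2.1, h2.2, h3.1, h3.2]

/-- A weakly convergent sequence in `L¹` is bounded: along a subsequence with `‖f (n k)‖₁ > k`,
the test functions `sign (f (n k)) / (k + 1)` tend to `0` while their pairings do not. -/
lemma exists_norm_bound {μ : Measure α} [SigmaFinite μ] {f : ℕ → α → ℝ} {g : α → ℝ}
    (hf : ∀ n, Integrable (f n) μ)
    (hw : ∀ φ : α → ℝ, Measurable φ → (∃ C : ℝ, ∀ x, |φ x| ≤ C) →
      Tendsto (fun n => ∫ x, φ x * f n x ∂μ) atTop (𝓝 (∫ x, φ x * g x ∂μ))) :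
    ∃ C : ℝ, ∀ n, ∫ x, |f n x| ∂μ ≤ C := by
  have key : ∃ k : ℕ, ∀ n ≥ k, ∫ x, |f n x| ∂μ ≤ k := by
    by_contra! hcon
    choose ns hge hns using hcon
    have htop : Tendsto ns atTop atTop := tendsto_atTop_mono hge tendsto_id
    let F : ℕ → α → ℝ := fun k => (hf (ns k)).1.mk
    have hF : ∀ k, f (ns k) =ᵐ[μ] F k := fun k => (hf (ns k)).1.ae_eq_mk
    have hFm : ∀ k, Measurable (F k) := fun k => (hf (ns k)).1.stronglyMeasurable_mk.measurable
    let s : ℕ → α → ℝ := fun k x => if 0 ≤ F k x then 1 else -1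
    have hs : ∀ k x, |s k x| = 1 := fun k x => by
      simp only [s]
      split_ifs <;> simp
    have hsF : ∀ k x, s k x * F k x = |F k x| := fun k x => by
      simp only [s]
      split_ifs with h0
      · rw [abs_of_nonneg h0, one_mul]
      · rw [abs_of_neg (not_le.1 h0)]
        ring
    have hlim := tendsto_pairing_zero (f := fun k => f (ns k)) (g := g) (μ := μ)
      (h := fun k x => (1 / ((k : ℝ) + 1)) * s k x)
      (fun k => hf _) (fun φ h1 h2 => (hw φ h1 h2).comp htop)
      (fun k => ((measurable_const.ite (measurableSet_le measurable_const (hFm k))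
        measurable_const)).const_mul _)
      (fun k x => by
        rw [abs_mul, hs, mul_one, abs_of_nonneg (by positivity)]
        exact div_le_one_of_le₀ (by simp) (by positivity))
      (Eventually.of_forall fun x => by
        refine squeeze_zero_norm (fun k => ?_) tendsto_one_div_add_atTop_nhds_zero_nat
        rw [Real.norm_eq_abs, abs_mul, hs, mul_one, abs_of_nonneg (by positivity)])
    have hval : ∀ k : ℕ, (1 / ((k : ℝ) + 1)) * k
        ≤ ∫ x, (1 / ((k : ℝ) + 1)) * s k x * f (ns k) x ∂μ := by
      intro k
      have : ∫ x, (1 / ((k : ℝ) + 1)) * s k x * f (ns k) x ∂μ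
          = (1 / ((k : ℝ) + 1)) * ∫ x, |f (ns k) x| ∂μ := by
        rw [← integral_const_mul]
        refine integral_congr_ae ?_
        filter_upwards [hF k] with x hx
        rw [hx, mul_assoc, hsF]
      rw [this]
      exact mul_le_mul_of_nonneg_left (hns k).le (by positivity)
    have h1 : Tendsto (fun k : ℕ => (1 / ((k : ℝ) + 1)) * k) atTop (𝓝 1) := by
      have := (tendsto_one_div_add_atTop_nhds_zero_nat (𝕜 := ℝ)).const_sub 1
      rw [sub_zero] at this
      refine this.congr fun k => ?_
      field_simp
      ring
    exact absurd (le_of_tendsto_of_tendsto' h1 hlim hval) (by norm_num)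
  obtain ⟨k, hk⟩ := key
  refine ⟨k + ∑ i ∈ Finset.range k, ∫ x, |f i x| ∂μ, fun n => ?_⟩
  have hnn : ∀ i, 0 ≤ ∫ x, |f i x| ∂μ := fun i => integral_nonneg fun x => abs_nonneg _
  rcases le_or_gt k n with h | h
  · exact (hk n h).trans (le_add_of_nonneg_right (Finset.sum_nonneg fun i _ => hnn i))
  · exact (Finset.single_le_sum (fun i _ => hnn i) (Finset.mem_range.2 h)).trans
      (le_add_of_nonneg_left (by positivity))

/-- The case of a single factor. -/
lemma tendsto_pairing {μ : Measure α} [SigmaFinite μ] {f : ℕ → α → ℝ} {g : α → ℝ}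
    (hf : ∀ n, Integrable (f n) μ)
    (hw : ∀ φ : α → ℝ, Measurable φ → (∃ C : ℝ, ∀ x, |φ x| ≤ C) →
      Tendsto (fun n => ∫ x, φ x * f n x ∂μ) atTop (𝓝 (∫ x, φ x * g x ∂μ)))
    {h : ℕ → α → ℝ} {h₀ : α → ℝ} {C : ℝ} (hm : ∀ n, Measurable (h n)) (hm₀ : Measurable h₀)
    (hb : ∀ n x, |h n x| ≤ C)
    (hlim : ∀ᵐ x ∂μ, Tendsto (fun n => h n x) atTop (𝓝 (h₀ x))) :
    Tendsto (fun n => ∫ x, h n x * f n x ∂μ) atTop (𝓝 (∫ x, h₀ x * g x ∂μ)) := by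
  -- the bound passes to `h₀` only almost everywhere, so `h₀` is truncated
  have hC : ∀ x, 0 ≤ C := fun x => (abs_nonneg _).trans (hb 0 x)
  let c : α → ℝ := fun x => max (-C) (min C (h₀ x))
  have hcm : Measurable c := measurable_const.max (measurable_const.min hm₀)
  have hcb : ∀ x, |c x| ≤ C := fun x =>
    abs_le.2 ⟨le_max_left _ _, max_le (by linarith [hC x]) (min_le_left _ _)⟩
  have hc : ∀ᵐ x ∂μ, c x = h₀ x := by
    filter_upwards [hlim] with x hx
    have := abs_le.1 (le_of_tendsto' hx.abs fun n => hb n x)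
    simp only [c]
    rw [min_eq_right this.2, max_eq_right this.1]
  have hD : ∀ x : α, 0 < 2 * C + 1 := fun x => by linarith [hC x]
  have h1 := tendsto_pairing_zero hf hw (h := fun n x => (2 * C + 1)⁻¹ * (h n x - c x))
    (fun n => ((hm n).sub hcm).const_mul _)
    (fun n x => by
      rw [abs_mul, abs_inv, abs_of_pos (hD x), inv_mul_le_iff₀ (hD x)]
      linarith [abs_sub (h n x) (c x), hb n x, hcb x])
    (by
      filter_upwards [hlim, hc] with x hx h2
      rw [← h2] at hx
      simpa using (hx.sub_const (c x)).const_mul (2 * C + 1)⁻¹)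
  have h2 := hw c hcm ⟨C, hcb⟩
  have h3 : ∫ x, h₀ x * g x ∂μ = (2 * C + 1) * 0 + ∫ x, c x * g x ∂μ := by
    rw [mul_zero, zero_add]
    refine integral_congr_ae ?_
    filter_upwards [hc] with x hx
    rw [hx]
  rw [h3]
  refine ((h1.const_mul (2 * C + 1)).add h2).congr fun n => ?_
  rw [← integral_const_mul, ← integral_add]
  · congr with x
    have := (hD x).ne'
    field_simp
    ring
  · refine Integrable.const_mul ?_ _
    refine (hf n).bdd_mul (c := |(2 * C + 1)⁻¹| * (2 * C))
      (((hm n).sub hcm).const_mul _).aestronglyMeasurable (Eventually.of_forall fun x => ?_)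
    rw [Real.norm_eq_abs, abs_mul]
    gcongr
    linarith [abs_sub (h n x) (c x), hb n x, hcb x]
  · exact (hf n).bdd_mul hcm.aestronglyMeasurable (Eventually.of_forall hcb)

/-! ### Several factors: Fubini and induction -/

/-- Fubini for an integrand with product weight, integrating out the coordinate `0` first. -/
lemma integral_pi_succ {k : ℕ} {β : Fin (k + 1) → Type*} [∀ j, MeasurableSpace (β j)]
    (μ : ∀ j, Measure (β j)) [∀ j, SigmaFinite (μ j)] {f : ∀ j, β j → ℝ}
    (hf : ∀ j, Integrable (f j) (μ j)) {Φ : (∀ j, β j) → ℝ} (hΦ : Measurable Φ)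
    {C : ℝ} (hb : ∀ᵐ x ∂(Measure.pi μ), |Φ x| ≤ C) :
    ∫ x, Φ x * ∏ j, f j (x j) ∂(Measure.pi μ)
      = ∫ z, (∫ y, Φ (Fin.cons y z) * f 0 y ∂(μ 0)) * ∏ j : Fin k, f j.succ (z j)
        ∂(Measure.pi fun j : Fin k => μ j.succ) := by
  have hmp := (measurePreserving_piFinSuccAbove μ 0).symm
  have hint : Integrable (fun x => Φ x * ∏ j, f j (x j)) (Measure.pi μ) :=
    (Integrable.fintype_prod_dep hf).bdd_mul hΦ.aestronglyMeasurable hb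
  rw [← hmp.integrable_comp_emb (MeasurableEquiv.measurableEmbedding _)] at hint
  rw [← hmp.integral_comp (MeasurableEquiv.measurableEmbedding _)]
  refine (integral_prod_symm _ hint).trans ?_
  refine integral_congr_ae (Eventually.of_forall fun z => ?_)
  simp only [← integral_mul_const]
  refine integral_congr_ae (Eventually.of_forall fun y => ?_)
  simp only [MeasurableEquiv.piFinSuccAbove_symm_apply, Fin.insertNthEquiv, Fin.prod_univ_succ,
    Fin.insertNth_zero, Equiv.coe_fn_mk]
  exact (mul_assoc _ _ _).symm

/-- The result for arbitrary σ-finite factors, by induction on their number: integrating out one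
coordinate turns the multipliers `Ψn` into new ones which are again bounded and a.e. convergent. -/
theorem tendsto_integral_pi (k : ℕ) (β : Fin k → Type*) [∀ j, MeasurableSpace (β j)]
    (μ : ∀ j, Measure (β j)) [∀ j, SigmaFinite (μ j)]
    (f : ℕ → ∀ j, β j → ℝ) (g : ∀ j, β j → ℝ)
    (hf : ∀ n j, Integrable (f n j) (μ j)) (hg : ∀ j, Integrable (g j) (μ j))
    (hw : ∀ j, ∀ φ : β j → ℝ, Measurable φ → (∃ C : ℝ, ∀ x, |φ x| ≤ C) →
      Tendsto (fun n => ∫ x, φ x * f n j x ∂(μ j)) atTop (𝓝 (∫ x, φ x * g j x ∂(μ j))))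
    (Ψn : ℕ → (∀ j, β j) → ℝ) (Ψ : (∀ j, β j) → ℝ)
    (hm : ∀ n, Measurable (Ψn n)) (hm₀ : Measurable Ψ)
    (hb : ∃ C : ℝ, ∀ n x, |Ψn n x| ≤ C)
    (hlim : ∀ᵐ x ∂(Measure.pi μ), Tendsto (fun n => Ψn n x) atTop (𝓝 (Ψ x))) :
    Tendsto (fun n => ∫ x, Ψn n x * ∏ j, f n j (x j) ∂(Measure.pi μ)) atTop
      (𝓝 (∫ x, Ψ x * ∏ j, g j (x j) ∂(Measure.pi μ))) := by
  obtain ⟨C, hC⟩ := hb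
  induction k generalizing C with
  | zero =>
    simp only [Finset.univ_eq_empty, Finset.prod_empty]
    exact tendsto_integral_mul (f := fun _ => 1) (C := C) (by
        rw [Measure.pi_of_empty]
        exact integrable_const _)
      (fun n => (hm n).aestronglyMeasurable) (fun n => Eventually.of_forall (hC n)) hlim
  | succ k ih =>
    have hb₀ : ∀ᵐ x ∂(Measure.pi μ), |Ψ x| ≤ C := by
      filter_upwards [hlim] with x hx using le_of_tendsto' hx.abs fun n => hC n x
    simp_rw [fun n => integral_pi_succ μ (hf n) (hm n) (Eventually.of_forall (hC n))]
    rw [integral_pi_succ μ hg hm₀ hb₀]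
    obtain ⟨D, hD⟩ := exists_norm_bound (hf · 0) (hw 0)
    have hcons : Measurable (fun p : (∀ j : Fin k, β j.succ) × β 0 =>
        (Fin.cons p.2 p.1 : ∀ j, β j)) := by
      rw [measurable_pi_iff]
      intro j
      refine Fin.cases ?_ (fun i => ?_) j
      · simpa using measurable_snd
      · simp only [Fin.cons_succ]
        exact (measurable_pi_apply i).comp measurable_fst
    have hmeas : ∀ (Φ : (∀ j, β j) → ℝ) (u : β 0 → ℝ), Measurable Φ → Integrable u (μ 0) →
        Measurable fun z : ∀ j : Fin k, β j.succ => ∫ y, Φ (Fin.cons y z) * u y ∂(μ 0) := by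
      intro Φ u hΦ hu
      have h1 : ∀ z : ∀ j : Fin k, β j.succ, ∫ y, Φ (Fin.cons y z) * u y ∂(μ 0)
          = ∫ y, Φ (Fin.cons y z) * hu.1.mk u y ∂(μ 0) := fun z =>
        integral_congr_ae (by
          filter_upwards [hu.1.ae_eq_mk] with y hy
          rw [← hy])
      simp_rw [h1]
      refine (StronglyMeasurable.integral_prod_right ?_).measurable
      exact ((hΦ.comp hcons).mul
        (hu.1.stronglyMeasurable_mk.measurable.comp measurable_snd)).stronglyMeasurable
    have hslice : ∀ᵐ z ∂(Measure.pi fun j : Fin k => μ j.succ), ∀ᵐ y ∂(μ 0),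
        Tendsto (fun n => Ψn n (Fin.cons y z)) atTop (𝓝 (Ψ (Fin.cons y z))) := by
      have h1 := (measurePreserving_piFinSuccAbove μ 0).symm.quasiMeasurePreserving.ae hlim
      have h2 := Measure.ae_ae_of_ae_prod 
        (Measure.measurePreserving_swap.quasiMeasurePreserving.ae h1)
      filter_upwards [h2] with z hz
      filter_upwards [hz] with y hy
      simp only [MeasurableEquiv.piFinSuccAbove_symm_apply, Fin.insertNthEquiv,
        Fin.insertNth_zero, Equiv.coe_fn_mk, Prod.swap] at hy
      exact hy
    refine ih (fun j => β j.succ) (fun j => μ j.succ) (fun n j => f n j.succ) (fun j => g j.succ)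
      (fun n j => hf n _) (fun j => hg _) (fun j => hw _) _ _
      (fun n => hmeas _ _ (hm n) (hf n 0)) (hmeas _ _ hm₀ (hg 0)) ?_ (|C| * D) ?_
    · filter_upwards [hslice] with z hz
      exact tendsto_pairing (hf · 0) (hw 0)
        (fun n => (hm n).comp (hcons.comp measurable_prodMk_left))
        (hm₀.comp (hcons.comp measurable_prodMk_left)) (fun n y => hC n _) hz
    · intro n z
      calc |∫ y, Ψn n (Fin.cons y z) * f n 0 y ∂(μ 0)|
          ≤ ∫ y, |C| * |f n 0 y| ∂(μ 0) := by
            rw [← Real.norm_eq_abs (∫ y, _ ∂(μ 0))]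
            refine norm_integral_le_of_norm_le ((hf n 0).abs.const_mul _)
              (Eventually.of_forall fun y => ?_)
            rw [Real.norm_eq_abs, abs_mul]
            exact mul_le_mul_of_nonneg_right ((hC n _).trans (le_abs_self C)) (abs_nonneg _)
        _ = |C| * ∫ y, |f n 0 y| ∂(μ 0) := integral_const_mul _ _
        _ ≤ |C| * D := by
            gcongr
            exact hD n

end WeakL1

/-- A product of weakly-`L¹` convergent sequences times a uniformly bounded,
a.e. pointwise convergent sequence of measurable functions: the integrals converge. -/
theorem stmt6 (k : ℕ) (d : Fin k → ℕ)
    (X : ∀ j, Set (EuclideanSpace ℝ (Fin (d j)))) (hX : ∀ j, MeasurableSet (X j))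
    (μ : ∀ j, Measure (X j)) [∀ j, SigmaFinite (μ j)] (hreg : ∀ j, (μ j).Regular)
    (f : ℕ → ∀ j, (X j) → ℝ) (g : ∀ j, (X j) → ℝ)
    (hfint : ∀ n j, Integrable (f n j) (μ j)) (hgint : ∀ j, Integrable (g j) (μ j))
    (hweak : ∀ j, ∀ φ : (X j) → ℝ, Measurable φ → (∃ C : ℝ, ∀ x, |φ x| ≤ C) →
      Tendsto (fun n => ∫ x, φ x * f n j x ∂(μ j)) atTop (𝓝 (∫ x, φ x * g j x ∂(μ j))))
    (Ψn : ℕ → (∀ j, X j) → ℝ) (Ψ : (∀ j, X j) → ℝ)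
    (hΨnmeas : ∀ n, Measurable (Ψn n)) (hΨmeas : Measurable Ψ)
    (hΨbd : ∃ C : ℝ, ∀ n x, |Ψn n x| ≤ C)
    (hΨconv : ∀ᵐ x ∂(Measure.pi μ), Tendsto (fun n => Ψn n x) atTop (𝓝 (Ψ x))) :
    Tendsto (fun n => ∫ x, Ψn n x * ∏ j, f n j (x j) ∂(Measure.pi μ)) atTop
      (𝓝 (∫ x, Ψ x * ∏ j, g j (x j) ∂(Measure.pi μ))) := by
  exact WeakL1.tendsto_integral_pi k (fun j => X j) μ f g hfint hgint hweak Ψn Ψ hΨnmeas hΨmeas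
    hΨbd hΨconv
end

section
/- There is an absolute constant C₀ ∈ (0, ∞) such that for all α with 0 ≤ α < 1 and all y, z ≥ 0: ∫_{S²×S²} [ (y−z)² + yz(1 − (ω·ω_*)²) ] / |√(2y)ω − √(2z)ω_*|^{3+α} dω dω_* ≤ (C₀/(1−α)) ( y^{(1−α)/2} + z^{(1−α)/2} ). -/
/-!
Write `a = √(2y)`, `b = √(2z)`, `M = max a b` and `D = ‖aω - bω'‖`. Since
`(a - b)² ≤ D²` and `D² = (a - b)² + 2ab(1 - ω·ω')`, the numerator is at most `2M²D²`
(`numerator_le`), so the integrand is at most `2M² D^{-(1+α)}`. Moreover `M‖ω - ω'‖ ≤ 2D`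
(`max_mul_norm_sub_le`), so up to the factor `M^{1-α}` it remains to bound
`∫ ‖ω - ω'‖^{-(1+α)} dω'` by `K / (1 - α)`. This follows from the layer-cake formula
(`lintegral_rpow_le`) and the fact that a spherical cap of radius `r` has measure `O(r²)`
(`cap_le`).

Both the integrand (`0 / 0 = 0`) and the real power `D^{-(1+α)}` take the value `0` where `D = 0`;
for this reason the layer-cake bound is stated for powers of `2D / M` rather than of `‖ω - ω'‖`,
and no null set has to be discarded.
-/

open MeasureTheory Real
open scoped RealInnerProductSpace ENNReal

noncomputable section

/-- The surface measure on the unit sphere `S² ⊂ ℝ³` (total mass `4π`). -/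
noncomputable def sphM : Measure (Metric.sphere (0 : E3) 1) :=
  (volume : Measure E3).toSphere

/-- The constant in the quadratic bound for the measure of spherical caps. -/
def capC : ℝ := 243 * (volume (Metric.ball (0 : E3) 1)).toReal

lemma capC_pos : 0 < capC := by
  have := ENNReal.toReal_pos (Metric.measure_ball_pos volume (0 : E3) one_pos).ne'
    measure_ball_lt_top.ne
  unfold capC
  positivity

open scoped Pointwise in
/-- The cone over a cap of radius `r` is covered by the balls of radius `3r` centred at `k r ω`
with `0 ≤ k ≤ 1 / r`; there are at most `3 / r` of them, each of volume `27 r³ |B|`. -/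
lemma cap_le (ω : Metric.sphere (0 : E3) 1) (r : ℝ) (hr : 0 < r) (hr2 : r ≤ 2) :
    sphM {ω' | ‖(ω : E3) - ω'‖ ≤ r} ≤ ENNReal.ofReal (capC * r ^ 2) := by
  have hm : MeasurableSet {ω' : Metric.sphere (0 : E3) 1 | ‖(ω : E3) - ω'‖ ≤ r} :=
    (isClosed_le (by fun_prop) continuous_const).measurableSet
  rw [sphM, Measure.toSphere_apply' _ hm]
  have hsub : Set.Ioo (0 : ℝ) 1 • (((↑) : Metric.sphere (0 : E3) 1 → E3) ''
      {ω' : Metric.sphere (0 : E3) 1 | ‖(ω : E3) - ω'‖ ≤ r}) ⊆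
      ⋃ k ∈ Finset.range (⌊1 / r⌋₊ + 1), Metric.ball (((k : ℝ) * r) • (ω : E3)) (3 * r) := by
    rintro x ⟨t, ⟨ht0, ht1⟩, _, ⟨ω', hω', rfl⟩, rfl⟩
    simp only [Set.mem_ofPred_eq] at hω'
    simp only [Set.mem_iUnion, Finset.mem_range, Metric.mem_ball, exists_prop]
    refine ⟨⌊t / r⌋₊, Nat.lt_succ_of_le (Nat.floor_le_floor (by gcongr)), ?_⟩
    have h1 : (⌊t / r⌋₊ : ℝ) * r ≤ t := by
      have := Nat.floor_le (show 0 ≤ t / r by positivity)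
      rwa [le_div_iff₀ hr] at this
    have h2 : t < ((⌊t / r⌋₊ : ℝ) + 1) * r := by
      have := Nat.lt_floor_add_one (t / r)
      rwa [div_lt_iff₀ hr] at this
    have hn : ‖(ω : E3)‖ = 1 := by simp
    have e : t • (ω' : E3) - ((⌊t / r⌋₊ : ℝ) * r) • (ω : E3) =
        (t - (⌊t / r⌋₊ : ℝ) * r) • (ω : E3) - t • ((ω : E3) - ω') := by module
    rw [dist_eq_norm]
    change ‖t • (ω' : E3) - _‖ < _
    rw [e]
    refine (norm_sub_le _ _).trans_lt ?_
    rw [norm_smul, norm_smul, hn, Real.norm_of_nonneg ht0.le,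
      Real.norm_of_nonneg (sub_nonneg.2 h1)]
    nlinarith [norm_nonneg ((ω : E3) - ω')]
  have hcov : volume (Set.Ioo (0 : ℝ) 1 • (((↑) : Metric.sphere (0 : E3) 1 → E3) ''
      {ω' : Metric.sphere (0 : E3) 1 | ‖(ω : E3) - ω'‖ ≤ r})) ≤
      ENNReal.ofReal ((3 / r) * ((3 * r) ^ 3 * (volume (Metric.ball (0 : E3) 1)).toReal)) := by
    refine (measure_mono hsub).trans ((measure_biUnion_finset_le _ _).trans ?_)
    have hb : ∀ k : ℕ, volume (Metric.ball (((k : ℝ) * r) • (ω : E3)) (3 * r)) =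
        ENNReal.ofReal ((3 * r) ^ 3 * (volume (Metric.ball (0 : E3) 1)).toReal) := by
      intro k
      rw [Measure.addHaar_ball _ _ (by positivity), ENNReal.ofReal_mul (by positivity),
        ENNReal.ofReal_toReal measure_ball_lt_top.ne]
      simp
    simp only [hb, Finset.sum_const, Finset.card_range, nsmul_eq_mul]
    rw [ENNReal.ofReal_mul (p := 3 / r) (by positivity)]
    refine mul_le_mul_left ?_ _
    rw [← ENNReal.ofReal_natCast]
    apply ENNReal.ofReal_le_ofReal
    push_cast
    have := Nat.floor_le (show 0 ≤ 1 / r by positivity)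
    have h3 : 1 ≤ 2 / r := by rwa [le_div_iff₀ hr, one_mul]
    have h4 : 3 / r = 1 / r + 2 / r := by ring
    linarith
  calc _ ≤ ((3 : ℕ) : ℝ≥0∞) * ENNReal.ofReal
        ((3 / r) * ((3 * r) ^ 3 * (volume (Metric.ball (0 : E3) 1)).toReal)) := by
        gcongr
        simp
    _ = _ := by
        rw [← ENNReal.ofReal_natCast, ← ENNReal.ofReal_mul (by positivity)]
        congr 1
        unfold capC
        field_simp
        push_cast
        ring

lemma sphM_univ_le : sphM Set.univ ≤ ENNReal.ofReal (4 * capC) := by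
  have ω : Metric.sphere (0 : E3) 1 := ⟨EuclideanSpace.single 0 1, by simp⟩
  have := cap_le ω 2 (by norm_num) le_rfl
  convert this using 2
  · symm
    rw [Set.eq_univ_iff_forall]
    intro ω'
    refine (norm_sub_le _ _).trans ?_
    simp
    norm_num
  · ring

/-- Any function `h ≥ ‖ω - ·‖` has `∫ h^{-(1+α)} = O(1 / (1 - α))`: the superlevel set
`{h^{-(1+α)} > t}` lies in the cap of radius `t^{-1/(1+α)}`, of measure `O(t^{-2/(1+α)})`. -/
lemma lintegral_rpow_le (α : ℝ) (h0 : 0 ≤ α) (h1 : α < 1) (ω : Metric.sphere (0 : E3) 1)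
    (h : Metric.sphere (0 : E3) 1 → ℝ) (hm : Measurable h)
    (hh : ∀ ω' : Metric.sphere (0 : E3) 1, ‖(ω : E3) - ω'‖ ≤ h ω') :
    ∫⁻ ω', ENNReal.ofReal (h ω' ^ (-(1 + α))) ∂sphM ≤ ENNReal.ofReal (6 * capC / (1 - α)) := by
  have hnn : ∀ ω', 0 ≤ h ω' := fun ω' => (norm_nonneg _).trans (hh ω')
  have hC := capC_pos
  have hα : 0 < 1 - α := by linarith
  rw [lintegral_eq_lintegral_meas_lt sphM
    (Filter.Eventually.of_forall fun ω' => rpow_nonneg (hnn ω') _)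
    (hm.pow_const _).aemeasurable]
  rw [← Set.Ioc_union_Ioi_eq_Ioi (zero_le_one' ℝ)]
  refine (lintegral_union_le _ _ _).trans ?_
  have hI1 : ∫⁻ t in Set.Ioc (0 : ℝ) 1, sphM {a | t < h a ^ (-(1 + α))} ≤
      ENNReal.ofReal (4 * capC) := by
    calc _ ≤ ∫⁻ t in Set.Ioc (0 : ℝ) 1, ENNReal.ofReal (4 * capC) :=
          lintegral_mono fun t => (measure_mono (Set.subset_univ _)).trans sphM_univ_le
      _ = _ := by simp
  have hlt : -2 / (1 + α) < -1 := by
    rw [div_lt_iff₀ (by linarith)]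
    linarith
  have hI2 : ∫⁻ t in Set.Ioi (1 : ℝ), sphM {a | t < h a ^ (-(1 + α))} ≤
      ENNReal.ofReal (2 * capC / (1 - α)) := by
    calc _ ≤ ∫⁻ t in Set.Ioi (1 : ℝ), ENNReal.ofReal (capC * t ^ (-2 / (1 + α))) := by
          refine setLIntegral_mono' measurableSet_Ioi fun t ht => ?_
          have ht1 : (1 : ℝ) < t := ht
          have ht0 : 0 < t := by linarith
          have hr1 : t ^ (-1 / (1 + α)) ≤ 1 :=
            rpow_le_one_of_one_le_of_nonpos ht1.le
              (div_nonpos_of_nonpos_of_nonneg (by norm_num) (by linarith))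
          refine (measure_mono ?_).trans ((cap_le ω (t ^ (-1 / (1 + α))) (rpow_pos_of_pos ht0 _)
            (by linarith)).trans (le_of_eq ?_))
          · intro ω' hω'
            simp only [Set.mem_ofPred_eq] at hω' ⊢
            refine (hh ω').trans ?_
            have hpos : 0 < h ω' := by
              refine lt_of_le_of_ne (hnn ω') fun e => ?_
              rw [← e, zero_rpow (by linarith)] at hω'
              linarith
            have := rpow_le_rpow_of_nonpos ht0 hω'.le
              (show -1 / (1 + α) ≤ 0 from
                div_nonpos_of_nonpos_of_nonneg (by norm_num) (by linarith))
            rwa [← rpow_mul hpos.le, show -(1 + α) * (-1 / (1 + α)) = 1 by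
              field_simp, rpow_one] at this
          · rw [← rpow_natCast, ← rpow_mul ht0.le]
            congr 3
            push_cast
            ring
      _ = ENNReal.ofReal (∫ t in Set.Ioi (1 : ℝ), capC * t ^ (-2 / (1 + α))) := by
          rw [ofReal_integral_eq_lintegral_ofReal]
          · exact (integrableOn_Ioi_rpow_of_lt hlt one_pos).const_mul _
          · filter_upwards [ae_restrict_mem measurableSet_Ioi] with t ht
            have ht1 : (1 : ℝ) < t := ht
            have := rpow_nonneg (show 0 ≤ t by linarith) (-2 / (1 + α))
            positivity
      _ ≤ _ := by
          apply ENNReal.ofReal_le_ofReal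
          rw [integral_const_mul, integral_Ioi_rpow_of_lt hlt one_pos, one_rpow,
            show -1 / (-2 / (1 + α) + 1) = (1 + α) / (1 - α) by
              have h2 : 1 + α ≠ 0 := by linarith
              have h3 : -2 / (1 + α) + 1 ≠ 0 := by linarith
              rw [div_eq_div_iff h3 hα.ne']
              field_simp
              ring, ← mul_div_assoc]
          gcongr ?_ / _
          nlinarith
  refine (add_le_add hI1 hI2).trans ?_
  rw [← ENNReal.ofReal_add (by positivity) (by positivity)]
  apply ENNReal.ofReal_le_ofReal
  rw [← sub_nonneg, show 6 * capC / (1 - α) - (4 * capC + 2 * capC / (1 - α)) =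
    4 * capC * α / (1 - α) by field_simp; ring]
  positivity

lemma abs_sub_le_dist {a b : ℝ} (ha : 0 ≤ a) (hb : 0 ≤ b) {u v : E3} (hu : ‖u‖ = 1)
    (hv : ‖v‖ = 1) : |a - b| ≤ ‖a • u - b • v‖ := by
  have := abs_norm_sub_norm_le (a • u) (b • v)
  rwa [norm_smul, norm_smul, hu, hv, Real.norm_of_nonneg ha, Real.norm_of_nonneg hb, mul_one,
    mul_one] at this

lemma max_mul_norm_sub_le {a b : ℝ} (ha : 0 ≤ a) (hb : 0 ≤ b) {u v : E3} (hu : ‖u‖ = 1)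
    (hv : ‖v‖ = 1) : max a b * ‖u - v‖ ≤ 2 * ‖a • u - b • v‖ := by
  have h := abs_sub_le_dist ha hb hu hv
  rcases max_cases a b with ⟨e, _⟩ | ⟨e, _⟩
  · rw [e]
    calc a * ‖u - v‖ = ‖(a • u - b • v) - (a - b) • v‖ := by
          rw [show (a • u - b • v) - (a - b) • v = a • (u - v) by module, norm_smul,
            Real.norm_of_nonneg ha]
      _ ≤ ‖a • u - b • v‖ + ‖(a - b) • v‖ := norm_sub_le _ _
      _ ≤ _ := by
          rw [norm_smul, hv, Real.norm_eq_abs]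
          linarith
  · rw [e]
    calc b * ‖u - v‖ = ‖(a • u - b • v) - (a - b) • u‖ := by
          rw [show (a • u - b • v) - (a - b) • u = b • (u - v) by module, norm_smul,
            Real.norm_of_nonneg hb]
      _ ≤ ‖a • u - b • v‖ + ‖(a - b) • u‖ := norm_sub_le _ _
      _ ≤ _ := by
          rw [norm_smul, hu, Real.norm_eq_abs]
          linarith

lemma numerator_le {a b : ℝ} (ha : 0 ≤ a) (hb : 0 ≤ b) {u v : E3} (hu : ‖u‖ = 1)
    (hv : ‖v‖ = 1) :
    (a ^ 2 / 2 - b ^ 2 / 2) ^ 2 + a ^ 2 / 2 * (b ^ 2 / 2) * (1 - ⟪u, v⟫ ^ 2) ≤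
      2 * max a b ^ 2 * ‖a • u - b • v‖ ^ 2 := by
  have hD : ‖a • u - b • v‖ ^ 2 = (a - b) ^ 2 + 2 * (a * b) * (1 - ⟪u, v⟫) := by
    rw [norm_sub_sq_real, norm_smul, norm_smul, hu, hv, inner_smul_left, inner_smul_right,
      Real.norm_of_nonneg ha, Real.norm_of_nonneg hb]
    simp
    ring
  have hc := abs_real_inner_le_norm u v
  rw [hu, hv, mul_one, abs_le] at hc
  obtain ⟨hc1, hc2⟩ := hc
  rw [hD]
  generalize ⟪u, v⟫ = c at *
  have hM1 := le_max_left a b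
  have hM2 := le_max_right a b
  generalize max a b = M at *
  have hM : 0 ≤ M := ha.trans hM1
  have hab : a * b ≤ M ^ 2 := by nlinarith
  have hs : (a + b) ^ 2 ≤ 4 * M ^ 2 := by nlinarith
  have hab0 : 0 ≤ a * b := mul_nonneg ha hb
  have hx : 0 ≤ (a * b) * (1 - c) := mul_nonneg hab0 (by linarith)
  have e1 : (a - b) ^ 2 * (a + b) ^ 2 ≤ (a - b) ^ 2 * (4 * M ^ 2) := by gcongr
  have e2 : (a * b) * (1 - c) * ((a * b) * (1 + c)) ≤ (a * b) * (1 - c) * (M ^ 2 * 2) := by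
    gcongr <;> linarith
  nlinarith [mul_nonneg (sq_nonneg M) hx, mul_nonneg (sq_nonneg M) (sq_nonneg (a - b))]

/-- The pointwise bound on the integrand. -/
lemma integrand_le (α : ℝ) (h1 : α < 1) {a b : ℝ} (ha : 0 ≤ a) (hb : 0 ≤ b)
    (hM : 0 < max a b) {u v : E3} (hu : ‖u‖ = 1) (hv : ‖v‖ = 1) :
    ENNReal.ofReal ((a ^ 2 / 2 - b ^ 2 / 2) ^ 2 + a ^ 2 / 2 * (b ^ 2 / 2) * (1 - ⟪u, v⟫ ^ 2)) /
      ENNReal.ofReal (‖a • u - b • v‖ ^ ((3 : ℝ) + α)) ≤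
    ENNReal.ofReal (8 * max a b ^ (1 - α)) *
      ENNReal.ofReal ((2 * ‖a • u - b • v‖ / max a b) ^ (-(1 + α))) := by
  have hN := numerator_le ha hb hu hv
  rcases (norm_nonneg (a • u - b • v)).eq_or_lt with hD | hD
  · rw [← hD] at hN
    rw [ENNReal.ofReal_of_nonpos (by linarith), ENNReal.zero_div]
    exact zero_le
  · generalize ‖a • u - b • v‖ = D at *
    generalize max a b = M at *
    rw [← ENNReal.ofReal_div_of_pos (rpow_pos_of_pos hD _), ← ENNReal.ofReal_mul (by positivity)]
    apply ENNReal.ofReal_le_ofReal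
    have h2 : (2 : ℝ) ^ (1 + α) ≤ 4 := by
      calc (2 : ℝ) ^ (1 + α) ≤ 2 ^ (2 : ℝ) := rpow_le_rpow_of_exponent_le (by norm_num)
            (by linarith)
        _ = 4 := by norm_num
    have h2' : (1 : ℝ) / 4 ≤ 2 ^ (-(1 + α)) := by
      rw [rpow_neg (by norm_num), one_div]
      exact inv_anti₀ (by positivity) h2
    calc _ ≤ 2 * M ^ 2 * D ^ 2 / D ^ (3 + α) := by gcongr
      _ = 8 * (M ^ (1 - α) * M ^ (1 + α)) * (1 / 4 * D ^ (-(1 + α))) := by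
          rw [← rpow_add hM, show 1 - α + (1 + α) = 2 by ring,
            show 3 + α = (1 + α) + 2 by ring, rpow_add hD, rpow_neg hD.le]
          norm_num
          field_simp
          norm_num
      _ ≤ 8 * (M ^ (1 - α) * M ^ (1 + α)) * (2 ^ (-(1 + α)) * D ^ (-(1 + α))) := by gcongr
      _ = _ := by
          rw [div_rpow (by positivity) hM.le, mul_rpow (by norm_num) hD.le, rpow_neg hM.le]
          field_simp

lemma sqrt_rpow_le (α : ℝ) (h0 : 0 ≤ α) {y : ℝ} (hy : 0 ≤ y) :
    Real.sqrt (2 * y) ^ (1 - α) ≤ 2 * y ^ ((1 - α) / 2) := by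
  rw [sqrt_eq_rpow, ← rpow_mul (by positivity), mul_rpow (by norm_num) hy,
    show 1 / 2 * (1 - α) = (1 - α) / 2 by ring]
  gcongr
  calc (2 : ℝ) ^ ((1 - α) / 2) ≤ 2 ^ (1 : ℝ) :=
        rpow_le_rpow_of_exponent_le (by norm_num) (by linarith)
    _ = 2 := rpow_one _

/-- There is an absolute constant `C₀ > 0` such that for all `0 ≤ α < 1`
and `y, z ≥ 0`,
`∫_{S²×S²} [(y−z)² + yz(1−(ω·ω_*)²)] / |√(2y)ω − √(2z)ω_*|^{3+α} dω dω_*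
  ≤ (C₀/(1−α)) (y^{(1−α)/2} + z^{(1−α)/2})`. -/
theorem stmt7 : ∃ C₀ : ℝ, 0 < C₀ ∧
    ∀ α : ℝ, 0 ≤ α → α < 1 → ∀ y z : ℝ, 0 ≤ y → 0 ≤ z →
      (∫⁻ ω : Metric.sphere (0 : E3) 1, ∫⁻ ω' : Metric.sphere (0 : E3) 1,
          ENNReal.ofReal ((y - z) ^ 2 + y * z * (1 - (⟪(ω : E3), (ω' : E3)⟫) ^ 2)) /
            ENNReal.ofReal
              (‖Real.sqrt (2 * y) • (ω : E3) - Real.sqrt (2 * z) • (ω' : E3)‖ ^ ((3 : ℝ) + α))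
        ∂sphM ∂sphM) ≤
      ENNReal.ofReal ((C₀ / (1 - α)) * (y ^ ((1 - α) / 2) + z ^ ((1 - α) / 2))) := by
  have hC := capC_pos
  refine ⟨16 * (6 * capC) * (4 * capC), by positivity, fun α h0 h1 y z hy hz => ?_⟩
  have hα : 0 < 1 - α := by linarith
  have hya : y = Real.sqrt (2 * y) ^ 2 / 2 := by
    rw [Real.sq_sqrt (by positivity)]
    ring
  have hzb : z = Real.sqrt (2 * z) ^ 2 / 2 := by
    rw [Real.sq_sqrt (by positivity)]
    ring
  have hya' := sqrt_rpow_le α h0 hy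
  have hzb' := sqrt_rpow_le α h0 hz
  have ha : 0 ≤ Real.sqrt (2 * y) := Real.sqrt_nonneg _
  have hb : 0 ≤ Real.sqrt (2 * z) := Real.sqrt_nonneg _
  generalize Real.sqrt (2 * y) = a at *
  generalize Real.sqrt (2 * z) = b at *
  rcases (le_max_of_le_left ha : 0 ≤ max a b).eq_or_lt with hM | hM
  · have ea : a = 0 := le_antisymm (hM ▸ le_max_left a b) ha
    have eb : b = 0 := le_antisymm (hM ▸ le_max_right a b) hb
    have ey : y = 0 := by rw [hya, ea]; norm_num
    have ez : z = 0 := by rw [hzb, eb]; norm_num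
    simp [ey, ez]
  have hMp : max a b ^ (1 - α) ≤ 2 * (y ^ ((1 - α) / 2) + z ^ ((1 - α) / 2)) := by
    have p1 : 0 ≤ y ^ ((1 - α) / 2) := by positivity
    have p2 : 0 ≤ z ^ ((1 - α) / 2) := by positivity
    rcases max_cases a b with ⟨e, _⟩ | ⟨e, _⟩ <;> rw [e] <;> linarith
  have inner_bd : ∀ ω : Metric.sphere (0 : E3) 1, (∫⁻ ω' : Metric.sphere (0 : E3) 1,
      ENNReal.ofReal ((y - z) ^ 2 + y * z * (1 - (⟪(ω : E3), (ω' : E3)⟫) ^ 2)) /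
        ENNReal.ofReal (‖a • (ω : E3) - b • (ω' : E3)‖ ^ ((3 : ℝ) + α)) ∂sphM) ≤
      ENNReal.ofReal (8 * max a b ^ (1 - α)) * ENNReal.ofReal (6 * capC / (1 - α)) := by
    intro ω
    have hmeas : Measurable fun ω' : Metric.sphere (0 : E3) 1 =>
        2 * ‖a • (ω : E3) - b • (ω' : E3)‖ / max a b :=
      Continuous.measurable (by fun_prop)
    refine le_trans (lintegral_mono fun ω' => ?_) ((lintegral_const_mul
      (ENNReal.ofReal (8 * max a b ^ (1 - α)))
      (hmeas.pow_const (-(1 + α))).ennreal_ofReal).trans_le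
        (mul_le_mul_right (lintegral_rpow_le α h0 h1 ω _ hmeas fun ω' => ?_) _))
    · have := integrand_le α h1 ha hb hM (u := (ω : E3)) (v := (ω' : E3)) (by simp) (by simp)
      rwa [← hya, ← hzb] at this
    · rw [le_div_iff₀ hM, mul_comm]
      exact max_mul_norm_sub_le ha hb (by simp) (by simp)
  refine (lintegral_mono inner_bd).trans ?_
  rw [lintegral_const]
  refine (mul_le_mul_right sphM_univ_le _).trans ?_
  rw [← ENNReal.ofReal_mul (by positivity), ← ENNReal.ofReal_mul (by positivity)]
  apply ENNReal.ofReal_le_ofReal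
  calc 8 * max a b ^ (1 - α) * (6 * capC / (1 - α)) * (4 * capC)
      ≤ 8 * (2 * (y ^ ((1 - α) / 2) + z ^ ((1 - α) / 2))) * (6 * capC / (1 - α)) * (4 * capC) := by
        gcongr
    _ = _ := by ring

end
end

section
/- There is an absolute constant C₀ ∈ (0, ∞) such that for all α with 0 ≤ α < 1 and all y, z ≥ 0: ∫_{S²×S²} [ (y−z)² + yz(1 − (ω·ω_*)²) ] / ( |√(2y)ω − √(2z)ω_*|³ · min(|√(2y)ω − √(2z)ω_*|^α, 1) ) dω dω_* ≤ (C₀/(1−α)) ( y^{1/2} + y^{(1−α)/2} + z^{1/2} + z^{(1−α)/2} ). -/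
/-!
Put `a = √(2y)`, `b = √(2z)`, `r = |aω − bω_*|` and `d = |ω − ω_*|`. The numerator is at most
`(a + b)² r² / 2` (`numerator_le`), so the integrand is at most
`(a + b)²/2 · (r⁻¹ + r^{-1-α})`. The triangle inequality gives `a d ≤ r + |a − b| ≤ 2r`, and
likewise for `b`, hence `r ≥ (a + b) d / 4` (`add_mul_dist_le`). Since `d ≤ 2`, the integrand is
bounded off the diagonal by a multiple of `((a + b) + (a + b)^{1-α}) d^{-(1+α)}`.

It remains to see that `∫ d^{-(1+α)} dω_* ≤ C/(1 − α)` (`lintegral_dist_rpow_le`). This follows from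
the layer-cake formula and the quadratic bound on the measure of spherical caps (`cap_le`): the cone
over a cap of radius `ρ` is covered by `O(1/ρ)` balls of radius `2ρ` centred on its axis.
-/


open MeasureTheory Real
open scoped RealInnerProductSpace ENNReal

noncomputable section

/-- Volume of the unit ball of `ℝ³`, as a real number. -/
def ballVol : ℝ := (volume (Metric.ball (0 : E3) 1)).toReal

lemma ballVol_pos : 0 < ballVol :=
  ENNReal.toReal_pos (Metric.measure_ball_pos volume _ one_pos).ne' measure_ball_lt_top.ne

lemma ofReal_ballVol : ENNReal.ofReal ballVol = volume (Metric.ball (0 : E3) 1) :=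
  ENNReal.ofReal_toReal measure_ball_lt_top.ne

lemma sphM_univ : sphM Set.univ = ENNReal.ofReal (3 * ballVol) := by
  rw [sphM, Measure.toSphere_apply_univ, ENNReal.ofReal_mul (by norm_num), ofReal_ballVol]
  simp

open scoped Pointwise in
/-- Spherical caps of radius `ρ` have measure `O(ρ²)`: the cone over such a cap is covered by the
balls of radius `2ρ` centred at `kρω`, `0 ≤ k ≤ 1/ρ`. -/
lemma cap_le_s8 (ω : Metric.sphere (0 : E3) 1) {ρ : ℝ} (h0 : 0 < ρ) (h1 : ρ ≤ 1) :
    sphM (Metric.ball ω ρ) ≤ ENNReal.ofReal (72 * ballVol * ρ ^ 2) := by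
  have hsub : Set.Ioo (0 : ℝ) 1 • ((↑) '' (Metric.ball ω ρ) : Set E3) ⊆
      ⋃ k ∈ Finset.range (⌊1 / ρ⌋₊ + 1), Metric.ball (((k : ℝ) * ρ) • (ω : E3)) (2 * ρ) := by
    rintro _ ⟨s, ⟨hs0, hs1⟩, _, ⟨ω', hω', rfl⟩, rfl⟩
    simp only [Set.mem_iUnion, Finset.mem_range]
    refine ⟨⌊s / ρ⌋₊, Nat.lt_succ_of_le (Nat.floor_le_floor (by gcongr)), ?_⟩
    have hk := Nat.floor_le (show 0 ≤ s / ρ by positivity)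
    have hk' := Nat.lt_floor_add_one (s / ρ)
    set k : ℝ := (⌊s / ρ⌋₊ : ℝ)
    rw [le_div_iff₀ h0] at hk
    rw [div_lt_iff₀ h0] at hk'
    have hd : ‖(ω' : E3) - ω‖ < ρ := by
      have := Metric.mem_ball.1 hω'
      rwa [Subtype.dist_eq, dist_eq_norm] at this
    rw [Metric.mem_ball, dist_eq_norm]
    have e : s • (ω' : E3) - (k * ρ) • (ω : E3) =
        s • ((ω' : E3) - ω) + (s - k * ρ) • (ω : E3) := by
      rw [smul_sub, sub_smul]; abel
    have hω1 : ‖(ω : E3)‖ = 1 := by simp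
    calc ‖s • (ω' : E3) - (k * ρ) • (ω : E3)‖
        ≤ ‖s • ((ω' : E3) - ω)‖ + ‖(s - k * ρ) • (ω : E3)‖ := by rw [e]; exact norm_add_le _ _
      _ = s * ‖(ω' : E3) - ω‖ + (s - k * ρ) := by
          rw [norm_smul, norm_smul, hω1, Real.norm_of_nonneg hs0.le,
            Real.norm_of_nonneg (by linarith), mul_one]
      _ < 2 * ρ := by nlinarith [norm_nonneg ((ω' : E3) - ω)]
  have hfr : Module.finrank ℝ E3 = 3 := by simp
  rw [sphM, Measure.toSphere_apply' _ Metric.isOpen_ball.measurableSet, hfr]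
  have hball : ∀ x : E3, volume (Metric.ball x (2 * ρ)) =
      ENNReal.ofReal ((2 * ρ) ^ 3 * ballVol) := fun x => by
    rw [Measure.addHaar_ball _ _ (by positivity), hfr, ENNReal.ofReal_mul (by positivity),
      ofReal_ballVol]
  have hN : ((⌊1 / ρ⌋₊ + 1 : ℕ) : ℝ) ≤ 3 / ρ := by
    have h2 := Nat.floor_le (show 0 ≤ 1 / ρ by positivity)
    have h3 : 1 ≤ 1 / ρ := by rw [le_div_iff₀ h0]; linarith
    have h4 : 3 / ρ = 3 * (1 / ρ) := by ring
    push_cast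
    linarith
  calc ((3 : ℕ) : ℝ≥0∞) * volume (Set.Ioo (0 : ℝ) 1 • ((↑) '' (Metric.ball ω ρ) : Set E3))
      ≤ (3 : ℕ) * ∑ k ∈ Finset.range (⌊1 / ρ⌋₊ + 1),
          volume (Metric.ball (((k : ℝ) * ρ) • (ω : E3)) (2 * ρ)) := by
        gcongr
        exact (measure_mono hsub).trans (measure_biUnion_finset_le _ _)
    _ = ENNReal.ofReal (3 * (((⌊1 / ρ⌋₊ + 1 : ℕ) : ℝ) * ((2 * ρ) ^ 3 * ballVol))) := by
        have := ballVol_pos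
        simp only [hball, Finset.sum_const, Finset.card_range, nsmul_eq_mul]
        rw [ENNReal.ofReal_mul (show (0 : ℝ) ≤ 3 by norm_num),
          ENNReal.ofReal_mul (Nat.cast_nonneg _),
          ENNReal.ofReal_natCast]
        simp
    _ ≤ ENNReal.ofReal (72 * ballVol * ρ ^ 2) := by
        have := ballVol_pos
        apply ENNReal.ofReal_le_ofReal
        calc _ ≤ 3 * ((3 / ρ) * ((2 * ρ) ^ 3 * ballVol)) := by gcongr
          _ = 72 * ballVol * ρ ^ 2 := by field_simp; ring

lemma sphM_singleton (ω : Metric.sphere (0 : E3) 1) : sphM {ω} = 0 := by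
  have hlim : Filter.Tendsto (fun ρ : ℝ => ENNReal.ofReal (72 * ballVol * ρ ^ 2))
      (nhdsWithin 0 (Set.Ioi 0)) (nhds 0) := by
    have : Continuous fun ρ : ℝ => ENNReal.ofReal (72 * ballVol * ρ ^ 2) :=
      ENNReal.continuous_ofReal.comp (by fun_prop)
    simpa using (this.tendsto 0).mono_left nhdsWithin_le_nhds
  refine le_antisymm (ge_of_tendsto hlim ?_) zero_le
  filter_upwards [Ioo_mem_nhdsGT (one_pos (α := ℝ))] with ρ hρ
  exact (measure_mono (by simpa using hρ.1)).trans (cap_le_s8 ω hρ.1 hρ.2.le)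

/-- The power `d^{-(1+α)}` of the distance to a fixed point is integrable over the sphere, with
integral `O(1/(1-α))`. The value of the integrand at `ω' = ω` is `0` in Lean, on a null set. -/
lemma lintegral_dist_rpow_le (ω : Metric.sphere (0 : E3) 1) {α : ℝ} (h0 : 0 ≤ α) (h1 : α < 1) :
    ∫⁻ ω', ENNReal.ofReal (dist ω' ω ^ (-(1 + α))) ∂sphM ≤
      ENNReal.ofReal (147 * ballVol / (1 - α)) := by
  have hV := ballVol_pos
  have h1α : 0 < 1 - α := by linarith
  have hp : 0 < 1 + α := by linarith
  rw [lintegral_eq_lintegral_meas_lt _ (Filter.Eventually.of_forall fun _ => by positivity)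
    (by fun_prop), ← Set.Ioc_union_Ioi_eq_Ioi zero_le_one,
    lintegral_union measurableSet_Ioi (Set.Ioc_disjoint_Ioi le_rfl)]
  have hA : ∫⁻ t in Set.Ioc (0 : ℝ) 1, sphM {ω' | t < dist ω' ω ^ (-(1 + α))} ≤
      ENNReal.ofReal (3 * ballVol) := by
    calc _ ≤ ∫⁻ t in Set.Ioc (0 : ℝ) 1, ENNReal.ofReal (3 * ballVol) := by
          gcongr
          rw [← sphM_univ]
          exact measure_mono (Set.subset_univ _)
      _ = _ := by simp
  have hexp : -(2 / (1 + α)) < -1 := by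
    rw [neg_lt_neg_iff, lt_div_iff₀ hp]; linarith
  have hB : ∫⁻ t in Set.Ioi (1 : ℝ), sphM {ω' | t < dist ω' ω ^ (-(1 + α))} ≤
      ENNReal.ofReal (72 * ballVol * (2 / (1 - α))) := by
    calc _ ≤ ∫⁻ t in Set.Ioi (1 : ℝ),
            ENNReal.ofReal (72 * ballVol * t ^ (-(2 / (1 + α)))) := by
          refine setLIntegral_mono' measurableSet_Ioi fun t ht => ?_
          have ht1 : 1 < t := ht
          have ht0 : 0 < t := by linarith
          have hρ0 : 0 < t ^ (-(1 / (1 + α))) := by positivity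
          have hρ1 : t ^ (-(1 / (1 + α))) ≤ 1 :=
            Real.rpow_le_one_of_one_le_of_nonpos ht1.le (by simp; positivity)
          refine (measure_mono ?_).trans ((cap_le_s8 ω hρ0 hρ1).trans_eq ?_)
          · intro ω' hω'
            have hω'' : t < dist ω' ω ^ (-(1 + α)) := hω'
            rw [Metric.mem_ball]
            by_contra! hc
            have := Real.rpow_le_rpow_of_nonpos hρ0 hc (show -(1 + α) ≤ 0 by linarith)
            rw [← Real.rpow_mul ht0.le,
              show -(1 / (1 + α)) * -(1 + α) = 1 by field_simp, Real.rpow_one] at this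
            linarith
          · rw [← Real.rpow_natCast, ← Real.rpow_mul ht0.le]
            congr 3
            push_cast; ring
      _ = ENNReal.ofReal (∫ t in Set.Ioi (1 : ℝ), 72 * ballVol * t ^ (-(2 / (1 + α)))) := by
          rw [ofReal_integral_eq_lintegral_ofReal
            ((integrableOn_Ioi_rpow_of_lt hexp one_pos).const_mul _)]
          filter_upwards [ae_restrict_mem measurableSet_Ioi] with t ht
          have ht0 : 0 < t := one_pos.trans ht
          simp only [Pi.zero_apply]
          positivity
      _ ≤ _ := by
          rw [integral_const_mul, integral_Ioi_rpow_of_lt hexp one_pos, Real.one_rpow]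
          apply ENNReal.ofReal_le_ofReal
          have e : -1 / (-(2 / (1 + α)) + 1) = (1 + α) / (1 - α) := by
            have : -(2 / (1 + α)) + 1 = -((1 - α) / (1 + α)) := by field_simp; ring
            rw [this, neg_div_neg_eq, one_div_div]
          rw [e]
          gcongr
          linarith
  refine (add_le_add hA hB).trans ?_
  rw [← ENNReal.ofReal_add (by positivity) (by positivity)]
  apply ENNReal.ofReal_le_ofReal
  rw [le_div_iff₀ h1α]
  have : (3 * ballVol + 72 * ballVol * (2 / (1 - α))) * (1 - α) =
      147 * ballVol - 3 * ballVol * α := by field_simp; ring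
  rw [this]
  nlinarith

/-- The numerator vanishes to second order in the distance `r`. Besides `|a - b| ≤ r`, this uses
`ab(1 - t) ≤ r²`. -/
lemma numerator_le_s8 {a b t y z r : ℝ} (ha : 0 ≤ a) (hb : 0 ≤ b) (ht : -1 ≤ t ∧ t ≤ 1)
    (hy : a ^ 2 = 2 * y) (hz : b ^ 2 = 2 * z) (hr : r ^ 2 = a ^ 2 + b ^ 2 - 2 * (a * b * t)) :
    (y - z) ^ 2 + y * z * (1 - t ^ 2) ≤ (a + b) ^ 2 * r ^ 2 / 2 := by
  obtain ⟨ht, ht'⟩ := ht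
  obtain rfl : y = a ^ 2 / 2 := by linarith
  obtain rfl : z = b ^ 2 / 2 := by linarith
  rw [hr]
  have hab : 0 ≤ a * b := mul_nonneg ha hb
  have h1 : (a ^ 2 / 2 - b ^ 2 / 2) ^ 2 ≤ (a + b) ^ 2 * (a ^ 2 + b ^ 2 - 2 * (a * b * t)) / 4 := by
    have : 0 ≤ (a + b) ^ 2 * (a * b * (1 - t)) :=
      mul_nonneg (sq_nonneg _) (mul_nonneg hab (by linarith))
    nlinarith
  have h2 : a ^ 2 / 2 * (b ^ 2 / 2) * (1 - t ^ 2) ≤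
      (a + b) ^ 2 * (a ^ 2 + b ^ 2 - 2 * (a * b * t)) / 4 := by
    have e : a ^ 2 / 2 * (b ^ 2 / 2) * (1 - t ^ 2) =
        (a * b * (1 + t)) * (a * b * (1 - t)) / 4 := by ring
    rw [e]
    have h3 : a * b * (1 + t) ≤ (a + b) ^ 2 := by nlinarith [sq_nonneg a, sq_nonneg b]
    have h4 : a * b * (1 - t) ≤ a ^ 2 + b ^ 2 - 2 * (a * b * t) := by
      nlinarith [sq_nonneg (a - b)]
    have h5 : 0 ≤ a * b * (1 - t) := mul_nonneg hab (by linarith)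
    have := mul_le_mul h3 h4 h5 (sq_nonneg _)
    linarith
  linarith

/-- Since `||u| - |v|| ≤ |u - v|`, both `a d` and `b d` are at most `2r`. -/
lemma add_mul_dist_le (ω ω' : Metric.sphere (0 : E3) 1) {a b : ℝ} (ha : 0 ≤ a) (hb : 0 ≤ b) :
    (a + b) * dist ω' ω ≤ 4 * ‖a • (ω : E3) - b • (ω' : E3)‖ := by
  have hω : ‖(ω : E3)‖ = 1 := by simp
  have hω' : ‖(ω' : E3)‖ = 1 := by simp
  have hab : |a - b| ≤ ‖a • (ω : E3) - b • (ω' : E3)‖ := by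
    have := abs_norm_sub_norm_le (a • (ω : E3)) (b • (ω' : E3))
    rwa [norm_smul, norm_smul, hω, hω', Real.norm_of_nonneg ha, Real.norm_of_nonneg hb, mul_one,
      mul_one] at this
  have hd : dist ω' ω = ‖(ω : E3) - ω'‖ := by rw [dist_comm, Subtype.dist_eq, dist_eq_norm]
  have key1 : a * ‖(ω : E3) - ω'‖ ≤ ‖a • (ω : E3) - b • (ω' : E3)‖ + |a - b| := by
    calc a * ‖(ω : E3) - ω'‖ = ‖(a • (ω : E3) - b • (ω' : E3)) - (a - b) • (ω' : E3)‖ := by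
          rw [← Real.norm_of_nonneg ha, ← norm_smul, Real.norm_of_nonneg ha, smul_sub, sub_smul]
          congr 1; abel
      _ ≤ _ := by
          refine (norm_sub_le _ _).trans ?_
          rw [norm_smul (a - b), hω', mul_one, Real.norm_eq_abs]
  have key2 : b * ‖(ω : E3) - ω'‖ ≤ ‖a • (ω : E3) - b • (ω' : E3)‖ + |a - b| := by
    calc b * ‖(ω : E3) - ω'‖ = ‖(a • (ω : E3) - b • (ω' : E3)) - (a - b) • (ω : E3)‖ := by
          rw [← Real.norm_of_nonneg hb, ← norm_smul, Real.norm_of_nonneg hb, smul_sub, sub_smul]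
          congr 1; abel
      _ ≤ _ := by
          refine (norm_sub_le _ _).trans ?_
          rw [norm_smul (a - b), hω, mul_one, Real.norm_eq_abs]
  rw [hd]
  linarith

/-- Scalar form of the integrand bound, with `M = a + b`, once the numerator `n` is controlled by
`M² r²` and `r` is bounded below by `M d`. -/
lemma quotient_le {α M d r n : ℝ} (h0 : 0 ≤ α) (h1 : α < 1) (hM : 0 < M) (hd : 0 < d)
    (hd2 : d ≤ 2) (hr : M * d ≤ 4 * r) (hn : n ≤ M ^ 2 * r ^ 2 / 2) :
    n / (r ^ 3 * min (r ^ α) 1) ≤ (4 * M + 8 * M ^ (1 - α)) * d ^ (-(1 + α)) := by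
  have hr0 : 0 < r := by nlinarith [mul_pos hM hd]
  have hq : 0 < M * d / 4 := by positivity
  have hqr : M * d / 4 ≤ r := by linarith
  have hrα : 0 < r ^ α := by positivity
  have hmin : 0 < min (r ^ α) 1 := lt_min hrα one_pos
  have hdα : 0 < d ^ α := by positivity
  have hinv : (min (r ^ α) 1)⁻¹ ≤ 1 + (r ^ α)⁻¹ := by
    have : 0 < (r ^ α)⁻¹ := by positivity
    rcases min_cases (r ^ α) 1 with ⟨h, _⟩ | ⟨h, _⟩ <;> rw [h]
    · linarith
    · simpa using this.le
  have hr1 : r⁻¹ ≤ 8 / M * d ^ (-(1 + α)) := by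
    have h2 : d ^ α ≤ 2 := by
      calc d ^ α ≤ 2 ^ α := by gcongr
        _ ≤ 2 ^ (1 : ℝ) := Real.rpow_le_rpow_of_exponent_le (by norm_num) h1.le
        _ = 2 := by simp
    rw [Real.rpow_neg hd.le, Real.rpow_add hd, Real.rpow_one]
    calc r⁻¹ ≤ (M * d / 4)⁻¹ := by gcongr
      _ = 4 / M * (d⁻¹ * 1) := by field_simp
      _ ≤ 4 / M * (d⁻¹ * (2 * (d ^ α)⁻¹)) := by
          gcongr
          rw [← div_eq_mul_inv, le_div_iff₀ hdα]; linarith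
      _ = 8 / M * (d * d ^ α)⁻¹ := by field_simp; norm_num
  have hr2 : r⁻¹ * (r ^ α)⁻¹ ≤ 16 / (M * M ^ α) * d ^ (-(1 + α)) := by
    have h4 : (4 : ℝ) ^ α ≤ 4 := by
      calc (4 : ℝ) ^ α ≤ 4 ^ (1 : ℝ) := Real.rpow_le_rpow_of_exponent_le (by norm_num) h1.le
        _ = 4 := by simp
    rw [Real.rpow_neg hd.le, Real.rpow_add hd, Real.rpow_one]
    calc r⁻¹ * (r ^ α)⁻¹ ≤ (M * d / 4)⁻¹ * ((M * d / 4) ^ α)⁻¹ := by gcongr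
      _ = 4 * 4 ^ α / (M * M ^ α) * (d * d ^ α)⁻¹ := by
          rw [Real.div_rpow (by positivity) (by norm_num), Real.mul_rpow hM.le hd.le]
          field_simp
      _ ≤ 4 * 4 / (M * M ^ α) * (d * d ^ α)⁻¹ := by gcongr
      _ = _ := by norm_num
  calc n / (r ^ 3 * min (r ^ α) 1) ≤ (M ^ 2 * r ^ 2 / 2) / (r ^ 3 * min (r ^ α) 1) := by gcongr
    _ = M ^ 2 / 2 * (r⁻¹ * (min (r ^ α) 1)⁻¹) := by field_simp
    _ ≤ M ^ 2 / 2 * (r⁻¹ * (1 + (r ^ α)⁻¹)) := by gcongr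
    _ = M ^ 2 / 2 * (r⁻¹ + r⁻¹ * (r ^ α)⁻¹) := by ring
    _ ≤ M ^ 2 / 2 * (8 / M * d ^ (-(1 + α)) + 16 / (M * M ^ α) * d ^ (-(1 + α))) := by gcongr
    _ = _ := by
        rw [Real.rpow_sub hM, Real.rpow_one]
        field_simp
        ring

lemma sqrt_two_mul_rpow_le {x s : ℝ} (hx : 0 ≤ x) (h1 : s ≤ 1) :
    Real.sqrt (2 * x) ^ s ≤ 2 * x ^ (s / 2) := by
  rw [Real.sqrt_eq_rpow, ← Real.rpow_mul (by positivity), show 1 / 2 * s = s / 2 by ring,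
    Real.mul_rpow (by norm_num) hx]
  gcongr
  calc (2 : ℝ) ^ (s / 2) ≤ 2 ^ (1 : ℝ) :=
        Real.rpow_le_rpow_of_exponent_le (by norm_num) (by linarith)
    _ = 2 := by simp

/-- Integrand bound off the diagonal. -/
lemma integrand_le_s8 {α y z : ℝ} (h0 : 0 ≤ α) (h1 : α < 1) (hy : 0 ≤ y) (hz : 0 ≤ z)
    {ω ω' : Metric.sphere (0 : E3) 1} (hne : ω' ≠ ω) :
    ENNReal.ofReal ((y - z) ^ 2 + y * z * (1 - (⟪(ω : E3), (ω' : E3)⟫) ^ 2)) /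
      ENNReal.ofReal
        (‖Real.sqrt (2 * y) • (ω : E3) - Real.sqrt (2 * z) • (ω' : E3)‖ ^ (3 : ℕ) *
          min (‖Real.sqrt (2 * y) • (ω : E3) - Real.sqrt (2 * z) • (ω' : E3)‖ ^ α) 1) ≤
    ENNReal.ofReal (16 *
      (y ^ ((1 : ℝ) / 2) + y ^ ((1 - α) / 2) + z ^ ((1 : ℝ) / 2) + z ^ ((1 - α) / 2))) *
      ENNReal.ofReal (dist ω' ω ^ (-(1 + α))) := by
  have ha := Real.sqrt_nonneg (2 * y)
  have hb := Real.sqrt_nonneg (2 * z)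
  have hay : Real.sqrt (2 * y) ^ 2 = 2 * y := Real.sq_sqrt (by positivity)
  have hbz : Real.sqrt (2 * z) ^ 2 = 2 * z := Real.sq_sqrt (by positivity)
  have ya := sqrt_two_mul_rpow_le hy le_rfl
  have za := sqrt_two_mul_rpow_le hz le_rfl
  have yb := sqrt_two_mul_rpow_le hy (show 1 - α ≤ 1 by linarith)
  have zb := sqrt_two_mul_rpow_le hz (show 1 - α ≤ 1 by linarith)
  set a := Real.sqrt (2 * y)
  set b := Real.sqrt (2 * z)
  rw [Real.rpow_one] at ya za
  rcases (add_nonneg ha hb).eq_or_lt with hM | hM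
  -- If `y = z = 0`, the numerator vanishes, and `0 / 0 = 0` in `ℝ≥0∞`.
  · have hy0 : y = 0 := by nlinarith
    have hz0 : z = 0 := by nlinarith
    simp [hy0, hz0]
  have hd : 0 < dist ω' ω := dist_pos.2 hne
  have hω : ‖(ω : E3)‖ = 1 := by simp
  have hω' : ‖(ω' : E3)‖ = 1 := by simp
  have hd2 : dist ω' ω ≤ 2 := by
    rw [Subtype.dist_eq, dist_eq_norm]
    refine (norm_sub_le _ _).trans ?_
    rw [hω, hω']; norm_num
  have ht : |⟪(ω : E3), (ω' : E3)⟫| ≤ 1 := by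
    simpa [hω, hω'] using abs_real_inner_le_norm (ω : E3) (ω' : E3)
  have hrsq : ‖a • (ω : E3) - b • (ω' : E3)‖ ^ 2 =
      a ^ 2 + b ^ 2 - 2 * (a * b * ⟪(ω : E3), (ω' : E3)⟫) := by
    rw [norm_sub_sq_real, norm_smul, norm_smul, hω, hω', real_inner_smul_left,
      real_inner_smul_right, Real.norm_of_nonneg ha, Real.norm_of_nonneg hb]
    ring
  have hr := add_mul_dist_le ω ω' ha hb
  have hn := numerator_le_s8 ha hb (abs_le.1 ht) hay hbz hrsq
  have hr0 : 0 < ‖a • (ω : E3) - b • (ω' : E3)‖ := by nlinarith [mul_pos hM hd]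
  rw [← ENNReal.ofReal_div_of_pos
    (mul_pos (by positivity) (lt_min (by positivity) one_pos)),
    ← ENNReal.ofReal_mul (by positivity)]
  apply ENNReal.ofReal_le_ofReal
  refine (quotient_le h0 h1 hM hd hd2 hr hn).trans ?_
  gcongr
  have hsub := Real.rpow_add_le_add_rpow ha hb (show 0 ≤ 1 - α by linarith) (by linarith)
  have p1 : 0 ≤ y ^ ((1 : ℝ) / 2) := by positivity
  have p2 : 0 ≤ z ^ ((1 : ℝ) / 2) := by positivity
  linarith

/-- There is an absolute constant `C₀ > 0` such that for all `0 ≤ α < 1`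
and `y, z ≥ 0`,
`∫_{S²×S²} [(y−z)² + yz(1−(ω·ω_*)²)] / (|√(2y)ω − √(2z)ω_*|³ min(|√(2y)ω − √(2z)ω_*|^α, 1))
   dω dω_* ≤ (C₀/(1−α)) (y^{1/2} + y^{(1−α)/2} + z^{1/2} + z^{(1−α)/2})`. -/
theorem stmt8 : ∃ C₀ : ℝ, 0 < C₀ ∧
    ∀ α : ℝ, 0 ≤ α → α < 1 → ∀ y z : ℝ, 0 ≤ y → 0 ≤ z →
      (∫⁻ ω : Metric.sphere (0 : E3) 1, ∫⁻ ω' : Metric.sphere (0 : E3) 1,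
          ENNReal.ofReal ((y - z) ^ 2 + y * z * (1 - (⟪(ω : E3), (ω' : E3)⟫) ^ 2)) /
            ENNReal.ofReal
              (‖Real.sqrt (2 * y) • (ω : E3) - Real.sqrt (2 * z) • (ω' : E3)‖ ^ (3 : ℕ) *
                min (‖Real.sqrt (2 * y) • (ω : E3) - Real.sqrt (2 * z) • (ω' : E3)‖ ^ α) 1)
        ∂sphM ∂sphM) ≤
      ENNReal.ofReal ((C₀ / (1 - α)) *
        (y ^ ((1 : ℝ) / 2) + y ^ ((1 - α) / 2) + z ^ ((1 : ℝ) / 2) + z ^ ((1 - α) / 2))) := by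
  have hV := ballVol_pos
  refine ⟨7056 * ballVol ^ 2, by positivity, fun α h0 h1 y z hy hz => ?_⟩
  have h1α : 0 < 1 - α := by linarith
  set S := y ^ ((1 : ℝ) / 2) + y ^ ((1 - α) / 2) + z ^ ((1 : ℝ) / 2) + z ^ ((1 - α) / 2) with hS
  have hS0 : 0 ≤ S := by positivity
  have hinner : ∀ ω : Metric.sphere (0 : E3) 1, (∫⁻ ω' : Metric.sphere (0 : E3) 1,
          ENNReal.ofReal ((y - z) ^ 2 + y * z * (1 - (⟪(ω : E3), (ω' : E3)⟫) ^ 2)) /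
            ENNReal.ofReal
              (‖Real.sqrt (2 * y) • (ω : E3) - Real.sqrt (2 * z) • (ω' : E3)‖ ^ (3 : ℕ) *
                min (‖Real.sqrt (2 * y) • (ω : E3) - Real.sqrt (2 * z) • (ω' : E3)‖ ^ α) 1)
        ∂sphM) ≤ ENNReal.ofReal (16 * S) * ENNReal.ofReal (147 * ballVol / (1 - α)) := by
    intro ω
    have hae : ∀ᵐ ω' ∂sphM, ω' ≠ ω := by
      rw [ae_iff]; simpa using sphM_singleton ω
    refine (lintegral_mono_ae (hae.mono fun ω' hω' => integrand_le_s8 h0 h1 hy hz hω')).trans ?_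
    rw [lintegral_const_mul' _ _ ENNReal.ofReal_ne_top]
    gcongr
    exact lintegral_dist_rpow_le ω h0 h1
  refine (lintegral_mono hinner).trans ?_
  rw [lintegral_const, sphM_univ, ← ENNReal.ofReal_mul (by positivity),
    ← ENNReal.ofReal_mul (by positivity)]
  apply ENNReal.ofReal_le_ofReal
  apply le_of_eq
  field_simp
  ring

end
end
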